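/- arXiv:2406.12811 — 5 statements merged into one kernel-verified Lean document; each statement's English description precedes it below -/
import Mathlib

section
/- Every finitary finite-matching-extendable matroid is matchable. That is, if M is a finitary matroid such that for every finite set 𝒜 of pairwise disjoint circuits of M and every ground-set element e ∉ ⋃𝒜 there exists a circuit C of M with e ∈ C and C ∩ ⋃𝒜 = ∅, then the ground set of M can be partitioned into circuits of M (i.e., there is a set of pairwise disjoint circuits whose union is the ground set). -/
open Set Function

variable {α : Type*}

/-- A circuit of a matroid `M`: a minimal dependent set. -/
def Matroid.IsMinDepCircuit (M : Matroid α) (C : Set α) : Prop := Minimal M.Dep C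

/-- The deletion `M ＼ F`: the restriction of `M` to the complement of `F`;
its circuits are exactly the circuits of `M` disjoint from `F`. -/
def Matroid.del (M : Matroid α) (F : Set α) : Matroid α := M.restrict (M.E \ F)

/-- A matching in `M`: a set of pairwise disjoint circuits of `M`. -/
def Matroid.IsMatching (M : Matroid α) (𝒜 : Set (Set α)) : Prop :=
  (∀ C ∈ 𝒜, M.IsMinDepCircuit C) ∧ 𝒜.Pairwise Disjoint

/-- `M` is matchable if its ground set can be partitioned into circuits of `M`. -/
def Matroid.Matchable (M : Matroid α) : Prop :=
  ∃ 𝒜 : Set (Set α), M.IsMatching 𝒜 ∧ ⋃₀ 𝒜 = M.E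

/-- `M` is finite matching extendable (f.m.e.): for every finite matching `𝒜` and every
ground-set element `e ∉ ⋃₀ 𝒜` there is a circuit through `e` disjoint from `⋃₀ 𝒜`. -/
def Matroid.FME (M : Matroid α) : Prop :=
  ∀ 𝒜 : Set (Set α), 𝒜.Finite → M.IsMatching 𝒜 → ∀ e ∈ M.E \ ⋃₀ 𝒜,
    ∃ C, M.IsMinDepCircuit C ∧ e ∈ C ∧ C ∩ ⋃₀ 𝒜 = ∅

open Cardinal

namespace FMEProof

universe u v

lemma mk_biUnion_bound {α : Type u} {ι : Type v} (A : ι → Set α) (s : Set ι) (c : Cardinal.{u})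
    (hc : ℵ₀ ≤ c) (hs : Cardinal.lift.{u} #s ≤ Cardinal.lift.{v} c) (hA : ∀ i ∈ s, #(A i) ≤ c) :
    #(⋃ x ∈ s, A x : Set α) ≤ c := by
  rw [← Cardinal.lift_le.{v}]
  refine (Cardinal.mk_biUnion_le_lift A s).trans ?_
  have h1 : (⨆ x : s, Cardinal.lift.{v} #(A x.1)) ≤ Cardinal.lift.{v} c :=
    ciSup_le' fun x => Cardinal.lift_le.2 (hA x.1 x.2)
  calc _ ≤ Cardinal.lift.{v} c * Cardinal.lift.{v} c := mul_le_mul' hs h1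
    _ = Cardinal.lift.{v} c := Cardinal.mul_eq_self (by simpa using hc)

lemma mk_union_bound {α : Type u} (A B : Set α) (c : Cardinal.{u})
    (hc : ℵ₀ ≤ c) (hA : #A ≤ c) (hB : #B ≤ c) : #(A ∪ B : Set α) ≤ c :=
  (Cardinal.mk_union_le A B).trans (Cardinal.add_le_of_le hc hA hB)

lemma mk_finsets {α : Type u} (S : Set α) (c : Cardinal.{u}) (hc : ℵ₀ ≤ c) (hS : #S ≤ c) :
    #{s : Finset α | (s : Set α) ⊆ S} ≤ c := by
  classical
  have h1 : #{s : Finset α | (s : Set α) ⊆ S} ≤ #(Finset S) := by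
    refine Cardinal.mk_le_of_injective
      (f := fun s : {s : Finset α | (s : Set α) ⊆ S} => s.1.subtype (· ∈ S)) ?_
    rintro ⟨s, hs⟩ ⟨t, ht⟩ h
    simp only [Subtype.mk.injEq]
    ext x
    simp only [Finset.ext_iff, Finset.mem_subtype] at h
    constructor
    · intro hx; exact (h ⟨x, hs hx⟩).1 hx
    · intro hx; exact (h ⟨x, ht hx⟩).2 hx
  refine h1.trans ?_
  cases finite_or_infinite S
  · exact (Cardinal.mk_le_aleph0).trans hc
  · rw [Cardinal.mk_finset_of_infinite]; exact hS

lemma exists_closure {α : Type u} (F : Finset α → Set α) (S : Set α) :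
    ∃ T : Set α, S ⊆ T ∧ (∀ s : Finset α, (s : Set α) ⊆ T → F s ⊆ T) ∧
      ∀ c : Cardinal.{u}, ℵ₀ ≤ c → #S ≤ c → (∀ s, #(F s) ≤ c) → #T ≤ c := by
  let step : Set α → Set α := fun U => U ∪ ⋃ s ∈ {s : Finset α | (s : Set α) ⊆ U}, F s
  let U : ℕ → Set α := fun n => step^[n] S
  have hU : ∀ n, U (n + 1) = step (U n) := fun n => Function.iterate_succ_apply' step n S
  have hmono : Monotone U := monotone_nat_of_le_succ fun n => by
    rw [hU]; exact Set.subset_union_left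
  refine ⟨⋃ n, U n, Set.subset_iUnion U 0, ?_, ?_⟩
  · intro s hs
    obtain ⟨n, hn⟩ : ∃ n, (s : Set α) ⊆ U n := by
      have := hmono.directed_le
      exact this.exists_mem_subset_of_finset_subset_biUnion hs
    refine Set.Subset.trans ?_ (Set.subset_iUnion U (n+1))
    rw [hU]
    refine Set.Subset.trans ?_ Set.subset_union_right
    exact Set.subset_biUnion_of_mem (u := F) hn
  · intro c hc hS hF
    have hn : ∀ n, #(U n) ≤ c := by
      intro n
      induction n with
      | zero => exact hS
      | succ n ih =>
        rw [hU]
        refine mk_union_bound _ _ c hc ih ?_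
        refine mk_biUnion_bound _ _ c hc ?_ fun s _ => hF s
        rw [Cardinal.lift_le]
        exact mk_finsets _ c hc ih
    have := mk_biUnion_bound U Set.univ c hc (by simpa using hc) fun n _ => hn n
    simpa using this

lemma exists_ordinal_index (β : Type u) :
    ∃ o : β → Ordinal.{u}, Function.Injective o ∧ ∀ b, o b < (#β).ord := by
  obtain ⟨r, wo, hr⟩ := Cardinal.exists_ord_eq β
  exact ⟨Ordinal.typein r, Ordinal.typein_injective r, fun b => hr ▸ Ordinal.typein_lt_type r b⟩

lemma exists_ordinal_index_set {β : Type u} (S : Set β) :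
    ∃ o : β → Ordinal.{u}, Set.InjOn o S ∧ ∀ b ∈ S, o b < (#S).ord := by
  classical
  obtain ⟨o, ho, ho'⟩ := exists_ordinal_index S
  refine ⟨fun b => if h : b ∈ S then o ⟨b, h⟩ else 0, ?_, ?_⟩
  · intro a ha b hb h
    simp only [ha, hb, dif_pos] at h
    simpa using ho h
  · intro b hb
    simpa only [hb, dif_pos] using ho' ⟨b, hb⟩

lemma mk_le_of_injOn_Iic {β : Type u} (S : Set β) (o : β → Ordinal.{u}) (ho : Set.InjOn o S)
    (i : Ordinal.{u}) (hi : ∀ b ∈ S, o b ≤ i) : #S ≤ max ℵ₀ i.card := by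
  have h1 : Cardinal.lift.{u+1} #S ≤ Cardinal.lift.{u} #(Set.Iio (Order.succ i)) := by
    refine Cardinal.lift_mk_le_lift_mk_of_injective
      (f := fun b : S => (⟨o b.1, Order.lt_succ_of_le (hi b.1 b.2)⟩ : Set.Iio (Order.succ i))) ?_
    rintro ⟨a, ha⟩ ⟨b, hb⟩ h
    exact Subtype.ext (ho ha hb (congrArg Subtype.val h))
  rw [Cardinal.mk_Iio_ordinal, Cardinal.lift_lift, Cardinal.lift_le] at h1
  refine h1.trans ?_
  rw [← Ordinal.add_one_eq_succ, Ordinal.card_add_one]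
  exact Cardinal.add_le_of_le (le_max_left _ _) (le_max_right _ _)
    (Cardinal.one_le_aleph0.trans (le_max_left _ _))

variable {α : Type u}

/-- Finite matching extendability inside `X`. -/
def FMEOn (M : Matroid α) (X : Set α) : Prop :=
  ∀ 𝒜 : Set (Set α), 𝒜.Finite → (∀ C ∈ 𝒜, M.IsCircuit C ∧ C ⊆ X) → 𝒜.Pairwise Disjoint →
    ∀ e ∈ X, e ∉ ⋃₀ 𝒜 → ∃ C, M.IsCircuit C ∧ e ∈ C ∧ C ⊆ X ∧ Disjoint C (⋃₀ 𝒜)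

/-- `X` has a partition into circuits. -/
def MatchOn (M : Matroid α) (X : Set α) : Prop :=
  ∃ 𝒜 : Set (Set α), (∀ C ∈ 𝒜, M.IsCircuit C) ∧ 𝒜.Pairwise Disjoint ∧ ⋃₀ 𝒜 = X

/-- The dichotomy which makes deletion of `W` preserve extendability. -/
def Good (M : Matroid α) (X W : Set α) : Prop :=
  ∀ P : Finset α, P.Nonempty → (P : Set α) ⊆ W → ∀ D ⊆ X \ W, D.Nonempty → M.IsCircuit (P ∪ D) →
    ∀ A : Set α, A.Finite → ∃ D' ⊆ X \ W, Disjoint D' A ∧ M.IsCircuit (P ∪ D')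

lemma FMEOn.diff {M : Matroid α} [M.Finitary] {X W : Set α} (h : FMEOn M X) (hW : Good M X W) :
    FMEOn M (X \ W) := by
  classical
  intro 𝒜 hfin hC hdisj e he heA
  have hAfin : (⋃₀ 𝒜).Finite := hfin.sUnion fun C hC' => (hC C hC').1.finite
  have key : ∀ n : ℕ, ∀ C, M.IsCircuit C → e ∈ C → C ⊆ X → Disjoint C (⋃₀ 𝒜) →
      (C ∩ W).ncard = n → ∃ C, M.IsCircuit C ∧ e ∈ C ∧ C ⊆ X \ W ∧ Disjoint C (⋃₀ 𝒜) := by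
    intro n
    induction n using Nat.strong_induction_on with
    | _ n ih =>
      intro C hCc heC hCX hCA hn
      have hCWfin : (C ∩ W).Finite := hCc.finite.subset Set.inter_subset_left
      by_cases hne : (C ∩ W).Nonempty
      · have hU : C ∩ W ∪ C \ W = C := Set.inter_union_sdiff C W
        obtain ⟨D', hD', hdis, hcirc⟩ := hW hCWfin.toFinset (by simpa using hne)
          (by simp) (C \ W) (Set.sdiff_subset_sdiff_left hCX) ⟨e, heC, he.2⟩
          (by simpa [hU] using hCc) (⋃₀ 𝒜 ∪ C) (hAfin.union hCc.finite)
        rw [Set.Finite.coe_toFinset] at hcirc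
        rw [Set.disjoint_union_right] at hdis
        obtain ⟨p, hp⟩ := hne
        obtain ⟨C', hC's, hC', heC'⟩ := hCc.strong_elimination hcirc hp.1 (Or.inl hp) heC (by
          rintro (h1 | h1)
          · exact he.2 h1.2
          · exact Set.disjoint_left.1 hdis.2 h1 heC)
        have hsub : C' ∩ W ⊆ (C ∩ W) \ {p} := by
          rintro x ⟨hx, hxW⟩
          obtain ⟨hx1, hx2⟩ := hC's hx
          refine ⟨⟨?_, hxW⟩, hx2⟩
          rcases hx1 with h1 | h1 | h1
          · exact h1
          · exact h1.1
          · exact absurd hxW (hD' h1).2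
        refine ih _ ?_ C' hC' heC' ?_ ?_ rfl
        · rw [← hn]
          refine Set.ncard_lt_ncard ?_ hCWfin
          exact (hsub.trans Set.sdiff_subset).ssubset_of_mem_notMem hp fun h1 => (hsub h1).2 rfl
        · intro x hx
          rcases (hC's hx).1 with h1 | h1 | h1
          · exact hCX h1
          · exact hCX h1.1
          · exact (hD' h1).1
        · rw [Set.disjoint_left]
          intro x hx
          rcases (hC's hx).1 with h1 | h1 | h1
          · exact Set.disjoint_left.1 hCA h1
          · exact Set.disjoint_left.1 hCA h1.1
          · exact Set.disjoint_left.1 hdis.1 h1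
      · refine ⟨C, hCc, heC, fun x hx => ⟨hCX hx, fun hxW => hne ⟨x, hx, hxW⟩⟩, hCA⟩
  obtain ⟨C, h1, h2, h3, h4⟩ := h 𝒜 hfin (fun C h => ⟨(hC C h).1, (hC C h).2.trans Set.sdiff_subset⟩)
    hdisj e he.1 heA
  exact key _ C h1 h2 h3 h4 rfl

lemma matchOn_of_countable {M : Matroid α} {X : Set α} (hX : X.Countable) (h : FMEOn M X) :
    MatchOn M X := by
  classical
  rcases X.eq_empty_or_nonempty with rfl | hne
  · exact ⟨∅, by simp, by simp, by simp⟩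
  obtain ⟨f, hf⟩ := hX.exists_eq_range hne
  let Q : Set (Set α) → Prop := fun 𝒜 =>
    𝒜.Finite ∧ (∀ C ∈ 𝒜, M.IsCircuit C ∧ C ⊆ X) ∧ 𝒜.Pairwise Disjoint
  have hstep : ∀ (𝒜 : {𝒜 // Q 𝒜}) (n : ℕ), ∃ ℬ : {𝒜 // Q 𝒜}, 𝒜.1 ⊆ ℬ.1 ∧ f n ∈ ⋃₀ ℬ.1 := by
    rintro ⟨𝒜, h1, h2, h3⟩ n
    by_cases hn : f n ∈ ⋃₀ 𝒜
    · exact ⟨⟨𝒜, h1, h2, h3⟩, subset_rfl, hn⟩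
    obtain ⟨C, hC, heC, hCX, hCA⟩ := h 𝒜 h1 h2 h3 (f n) (hf ▸ Set.mem_range_self n) hn
    refine ⟨⟨insert C 𝒜, h1.insert C, ?_, ?_⟩, Set.subset_insert _ _, C, Set.mem_insert _ _, heC⟩
    · rintro C' (rfl | hC')
      · exact ⟨hC, hCX⟩
      · exact h2 C' hC'
    · refine h3.insert_of_symm fun B hB _ => ?_
      exact hCA.mono_right (Set.subset_sUnion_of_mem hB)
  choose g hg1 hg2 using hstep
  let s : ℕ → {𝒜 // Q 𝒜} := fun n => Nat.rec ⟨∅, by simp [Q]⟩ (fun n 𝒜 => g 𝒜 n) n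
  have hmono : Monotone fun n => (s n).1 := monotone_nat_of_le_succ fun n => hg1 (s n) n
  refine ⟨⋃ n, (s n).1, ?_, ?_, ?_⟩
  · intro C hC
    obtain ⟨n, hn⟩ := Set.mem_iUnion.1 hC
    exact ((s n).2.2.1 C hn).1
  · exact (Set.pairwise_iUnion hmono.directed_le).2 fun n => (s n).2.2.2
  · apply Set.Subset.antisymm
    · rintro x ⟨C, hC, hx⟩
      obtain ⟨n, hn⟩ := Set.mem_iUnion.1 hC
      exact ((s n).2.2.1 C hn).2 hx
    · rw [hf]
      rintro _ ⟨n, rfl⟩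
      obtain ⟨C, hC, hx⟩ := hg2 (s n) n
      exact ⟨C, Set.mem_iUnion.2 ⟨n + 1, hC⟩, hx⟩

/-- Candidate complements of `P`. -/
def Cand (M : Matroid α) (X : Set α) (P : Finset α) (D : Set α) : Prop :=
  D ⊆ X ∧ D.Nonempty ∧ Disjoint D (P : Set α) ∧ M.IsCircuit (P ∪ D)

lemma exists_maxFamily (M : Matroid α) (X : Set α) (P : Finset α) :
    ∃ 𝒟 : Set (Set α), (∀ D ∈ 𝒟, Cand M X P D) ∧ 𝒟.Pairwise Disjoint ∧
      ∀ D, Cand M X P D → ∃ D₀ ∈ 𝒟, ¬ Disjoint D D₀ := by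
  obtain ⟨𝒟, h⟩ := zorn_subset
    {𝒟 : Set (Set α) | (∀ D ∈ 𝒟, Cand M X P D) ∧ 𝒟.Pairwise Disjoint} (by
      intro c hc hch
      refine ⟨⋃₀ c, ⟨?_, ?_⟩, fun s hs => Set.subset_sUnion_of_mem hs⟩
      · rintro D ⟨s, hs, hD⟩
        exact (hc hs).1 D hD
      · exact (Set.pairwise_sUnion hch.directedOn).2 fun s hs => (hc hs).2)
  refine ⟨𝒟, h.prop.1, h.prop.2, fun D hD => ?_⟩
  by_contra! hcon
  have hins : insert D 𝒟 ∈ {𝒟 : Set (Set α) | (∀ D ∈ 𝒟, Cand M X P D) ∧ 𝒟.Pairwise Disjoint} := by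
    refine ⟨?_, h.prop.2.insert_of_symm fun B hB _ => hcon B hB⟩
    rintro C' (rfl | hC')
    · exact hD
    · exact h.prop.1 C' hC'
  have hD' : D ∈ 𝒟 := h.le_of_ge hins (Set.subset_insert _ _) (Set.mem_insert _ _)
  have := hcon D hD'
  rw [disjoint_self] at this
  exact hD.2.1.ne_empty this

lemma exists_disjoint_of_mk_lt (𝒟 : Set (Set α)) (h𝒟 : 𝒟.Pairwise Disjoint) (B : Set α)
    (hB : #B < #𝒟) : ∃ D ∈ 𝒟, Disjoint D B := by
  by_contra! hcon
  have : ∀ D : 𝒟, ∃ x : B, x.1 ∈ D.1 := by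
    rintro ⟨D, hD⟩
    obtain ⟨x, hx, hxB⟩ := Set.not_disjoint_iff.1 (hcon D hD)
    exact ⟨⟨x, hxB⟩, hx⟩
  choose g hg using this
  refine hB.not_ge (Cardinal.mk_le_of_injective (f := g) ?_)
  intro D D' h
  by_contra hne
  have h1 := h𝒟 D.2 D'.2 (fun h => hne (Subtype.ext h))
  exact Set.disjoint_left.1 h1 (hg D) (h ▸ hg D')

theorem main (M : Matroid α) [M.Finitary] (κ : Cardinal.{u}) :
    ∀ X : Set α, #X = κ → FMEOn M X → MatchOn M X := by
  classical
  induction κ using WellFoundedLT.induction with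
  | ind κ IH =>
  intro X hXκ hX
  by_cases hcount : X.Countable
  · exact matchOn_of_countable hcount hX
  have hκ : ℵ₀ < κ := by
    rw [← hXκ]; rwa [← not_le, Cardinal.le_aleph0_iff_set_countable]
  choose 𝒟 h𝒟c h𝒟d h𝒟m using exists_maxFamily M X
  choose o ho_inj ho_lt using fun P => exists_ordinal_index_set (𝒟 P)
  obtain ⟨ox, hox_inj, hox_lt⟩ := exists_ordinal_index_set X
  have hH : ∀ (W A : Set α) (e : α), ∃ H : Set α, H.Finite ∧
      ((∃ C, M.IsCircuit C ∧ e ∈ C ∧ C ⊆ X \ W ∧ Disjoint C A) →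
        M.IsCircuit H ∧ e ∈ H ∧ H ⊆ X \ W ∧ Disjoint H A) := by
    intro W A e
    by_cases h : ∃ C, M.IsCircuit C ∧ e ∈ C ∧ C ⊆ X \ W ∧ Disjoint C A
    · obtain ⟨C, hC⟩ := h
      exact ⟨C, hC.1.finite, fun _ => hC⟩
    · exact ⟨∅, Set.finite_empty, fun h' => absurd h' h⟩
  choose H hHfin hHspec using hH
  let c : Ordinal.{u} → Cardinal.{u} := fun i => max ℵ₀ i.card
  have hc0 : ∀ i, ℵ₀ ≤ c i := fun i => le_max_left _ _
  -- the closing-off operation at stage `i`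
  let Sel : Ordinal.{u} → Finset α → Set (Set α) := fun i s =>
    {D | D ∈ 𝒟 s ∧ (o s D ≤ i ∨ (𝒟 s).Countable)}
  let F : Ordinal.{u} → Set α → Finset α → Set α := fun i W s =>
    (⋃ D ∈ Sel i s, D) ∪ ⋃ e ∈ (s : Set α), H W ((s.erase e : Finset α) : Set α) e
  have hFcard : ∀ i W s, #(F i W s) ≤ c i := by
    intro i W s
    refine mk_union_bound _ _ _ (hc0 i) ?_ ?_
    · refine mk_biUnion_bound (fun D => D) _ _ (hc0 i) ?_ ?_
      · rw [Cardinal.lift_le]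
        by_cases hcs : (𝒟 s).Countable
        · exact (Cardinal.le_aleph0_iff_set_countable.2 (hcs.mono fun D hD => hD.1)).trans (hc0 i)
        · exact mk_le_of_injOn_Iic _ (o s) ((ho_inj s).mono fun D hD => hD.1) i
            fun D hD => hD.2.resolve_right hcs
      · intro D hD
        have : D.Finite := (h𝒟c s D hD.1).2.2.2.finite.subset Set.subset_union_right
        exact (Cardinal.le_aleph0_iff_set_countable.2 this.countable).trans (hc0 i)
    · have : (⋃ e ∈ (s : Set α), H W ((s.erase e : Finset α) : Set α) e).Finite :=
        s.finite_toSet.biUnion fun e _ => hHfin _ _ _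
      exact (Cardinal.le_aleph0_iff_set_countable.2 this.countable).trans (hc0 i)
  choose cl hcl1 hcl2 hcl3 using fun (F : Finset α → Set α) (S : Set α) => exists_closure F S
  obtain ⟨Z, hZ⟩ : ∃ Z : Ordinal.{u} → Set α, ∀ i, Z i =
      cl (F i (⋃ j ∈ Set.Iio i, Z j)) ((⋃ j ∈ Set.Iio i, Z j) ∪ {x | x ∈ X ∧ ox x ≤ i}) := by
    refine ⟨WellFounded.fix (C := fun _ => Set α) Ordinal.lt_wf fun i rec =>
      cl (F i (⋃ j, ⋃ h : j ∈ Set.Iio i, rec j h))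
        ((⋃ j, ⋃ h : j ∈ Set.Iio i, rec j h) ∪ {x | x ∈ X ∧ ox x ≤ i}), fun i => ?_⟩
    rw [WellFounded.fix_eq]
  let W : Ordinal.{u} → Set α := fun i => ⋃ j ∈ Set.Iio i, Z j
  have hZW : ∀ i, Z i = cl (F i (W i)) (W i ∪ {x | x ∈ X ∧ ox x ≤ i}) := hZ
  have hWZ : ∀ i, W i ⊆ Z i := fun i => by
    rw [hZW i]; exact Set.subset_union_left.trans (hcl1 _ _)
  have hZW' : ∀ j i, j < i → Z j ⊆ W i := fun j i h =>
    Set.subset_biUnion_of_mem (u := Z) (show j ∈ Set.Iio i from h)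
  have hZmono : Monotone Z := by
    intro j i h
    rcases h.eq_or_lt with rfl | h
    · exact subset_rfl
    · exact (hZW' j i h).trans (hWZ i)
  have hZcl : ∀ i (s : Finset α), (s : Set α) ⊆ Z i → F i (W i) s ⊆ Z i := by
    intro i s hs
    have := hcl2 (F i (W i)) (W i ∪ {x | x ∈ X ∧ ox x ≤ i}) s
    rw [← hZW i] at this
    exact this hs
  have hox_mem : ∀ x ∈ X, x ∈ Z (ox x) := by
    intro x hx
    rw [hZW]
    exact hcl1 _ _ (Or.inr ⟨hx, le_rfl⟩)
  have hWcard' : ∀ i, (∀ j < i, #(Z j) ≤ c j) → #(W i) ≤ c i := by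
    intro i hi
    refine mk_biUnion_bound Z _ _ (hc0 i) ?_ ?_
    · rw [Cardinal.mk_Iio_ordinal, Cardinal.lift_lift, Cardinal.lift_le]
      exact le_max_right _ _
    · intro j hj
      exact (hi j hj).trans (max_le_max_left _ (Ordinal.card_le_card (le_of_lt hj)))
  have hZcard : ∀ i, #(Z i) ≤ c i := by
    intro i
    induction i using WellFoundedLT.induction with
    | ind i ih =>
      rw [hZW i]
      refine hcl3 _ _ _ (hc0 i) (mk_union_bound _ _ _ (hc0 i) (hWcard' i ih) ?_)
        (hFcard i (W i))
      exact mk_le_of_injOn_Iic _ ox (hox_inj.mono fun x hx => hx.1) i fun x hx => hx.2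
  have hWcard : ∀ i, #(W i) ≤ c i := fun i => hWcard' i fun j _ => hZcard j
  have hgood : ∀ i, Good M X (W i) := by
    intro i P hPne hPW D hD hDne hcirc A hA
    obtain ⟨j, hj, hPj⟩ : ∃ j < i, (P : Set α) ⊆ Z j := by
      have h1 : ∀ p : α, ∃ j : Ordinal.{u}, p ∈ P → j < i ∧ p ∈ Z j := by
        intro p
        by_cases hp : p ∈ P
        · obtain ⟨j, hj, hpj⟩ := Set.mem_iUnion₂.1 (hPW hp)
          exact ⟨j, fun _ => ⟨hj, hpj⟩⟩
        · exact ⟨0, fun h => absurd h hp⟩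
      choose jj hjj using h1
      obtain ⟨q, hq, hqmax⟩ := P.exists_max_image jj hPne
      exact ⟨jj q, (hjj q hq).1, fun p hp => hZmono (hqmax p hp) (hjj p hp).2⟩
    have hin : ∀ D ∈ 𝒟 P, (o P D < i ∨ (𝒟 P).Countable) → D ⊆ W i := by
      intro D hD h
      obtain ⟨k, hki, hjk, hk⟩ : ∃ k < i, j ≤ k ∧ (o P D ≤ k ∨ (𝒟 P).Countable) := by
        rcases h with h | h
        · exact ⟨max j (o P D), max_lt hj h, le_max_left _ _, Or.inl (le_max_right _ _)⟩
        · exact ⟨j, hj, le_rfl, Or.inr h⟩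
      refine Set.Subset.trans ?_ (hZW' k i hki)
      refine Set.Subset.trans ?_ (hZcl k P (hPj.trans (hZmono hjk)))
      refine Set.Subset.trans ?_ Set.subset_union_left
      exact Set.subset_biUnion_of_mem (u := fun D : Set α => D) (show D ∈ Sel k P from ⟨hD, hk⟩)
    have hDP : Cand M X P D := ⟨hD.trans Set.sdiff_subset, hDne,
      Set.disjoint_left.2 fun x hx hxP => (hD hx).2 (hPW hxP), hcirc⟩
    obtain ⟨D₀, hD₀, hDD₀⟩ := h𝒟m P D hDP
    have hnot : ¬ (o P D₀ < i ∨ (𝒟 P).Countable) := by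
      intro h
      have := hin D₀ hD₀ h
      exact hDD₀ (Set.disjoint_left.2 fun x hx hx' => (hD hx).2 (this hx'))
    rw [not_or, not_lt] at hnot
    have hlt : c i < #(𝒟 P) := by
      refine max_lt ?_ ?_
      · rw [← not_le, Cardinal.le_aleph0_iff_set_countable]; exact hnot.2
      · exact Cardinal.lt_ord.1 (hnot.1.trans_lt (ho_lt P D₀ hD₀))
    have hcard : #(W i ∪ A : Set α) ≤ c i := mk_union_bound _ _ _ (hc0 i) (hWcard i)
      ((Cardinal.le_aleph0_iff_set_countable.2 hA.countable).trans (hc0 i))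
    obtain ⟨D', hD', hdis⟩ := exists_disjoint_of_mk_lt (𝒟 P) (h𝒟d P) _ (hcard.trans_lt hlt)
    rw [Set.disjoint_union_right] at hdis
    have := h𝒟c P D' hD'
    exact ⟨D', fun x hx => ⟨this.1 hx, Set.disjoint_left.1 hdis.1 hx⟩, hdis.2, this.2.2.2⟩
  let Y : Ordinal.{u} → Set α := fun i => (X ∩ Z i) \ W i
  have hYfme : ∀ i, FMEOn M (Y i) := by
    intro i 𝒜 hfin hC hdisj e he heA
    have hAfin : (⋃₀ 𝒜).Finite := hfin.sUnion fun C hC' => (hC C hC').1.finite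
    have hYX : Y i ⊆ X \ W i := fun x hx => ⟨hx.1.1, hx.2⟩
    have hex := (hX.diff (hgood i)) 𝒜 hfin (fun C h => ⟨(hC C h).1, (hC C h).2.trans hYX⟩) hdisj e
      (hYX he) heA
    obtain ⟨h1, h2, h3, h4⟩ := hHspec (W i) (⋃₀ 𝒜) e hex
    refine ⟨_, h1, h2, fun x hx => ⟨⟨(h3 hx).1, ?_⟩, (h3 hx).2⟩, h4⟩
    have hs : ((insert e hAfin.toFinset : Finset α) : Set α) ⊆ Z i := by
      intro y hy
      simp only [Finset.coe_insert, Set.Finite.coe_toFinset] at hy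
      rcases hy with rfl | ⟨C, hC', hy⟩
      · exact he.1.2
      · exact ((hC C hC').2 hy).1.2
    refine hZcl i _ hs (Or.inr ?_)
    refine Set.mem_iUnion₂.2 ⟨e, by simp, ?_⟩
    rw [Finset.erase_insert (by simpa using heA)]
    simpa using hx
  have hYmatch : ∀ i, i < κ.ord → MatchOn M (Y i) := by
    intro i hi
    refine IH _ ?_ (Y i) rfl (hYfme i)
    refine (Cardinal.mk_le_mk_of_subset (fun x hx => hx.1.2 : Y i ⊆ Z i)).trans_lt ?_
    exact (hZcard i).trans_lt (max_lt hκ (Cardinal.lt_ord.1 hi))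
  have hYdisj : ∀ i j, i ≠ j → Disjoint (Y i) (Y j) := by
    have : ∀ i j, i < j → Disjoint (Y i) (Y j) := fun i j h =>
      Set.disjoint_left.2 fun x hx hx' => hx'.2 (hZW' i j h hx.1.2)
    intro i j h
    rcases lt_or_gt_of_ne h with h | h
    · exact this i j h
    · exact (this j i h).symm
  have hYm : ∀ i, ∃ 𝒜 : Set (Set α), i < κ.ord → (∀ C ∈ 𝒜, M.IsCircuit C) ∧
      𝒜.Pairwise Disjoint ∧ ⋃₀ 𝒜 = Y i := by
    intro i
    by_cases hi : i < κ.ord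
    · obtain ⟨𝒜, h⟩ := hYmatch i hi
      exact ⟨𝒜, fun _ => h⟩
    · exact ⟨∅, fun h => absurd h hi⟩
  choose 𝒜 h𝒜 using hYm
  refine ⟨{C | ∃ i < κ.ord, C ∈ 𝒜 i}, ?_, ?_, ?_⟩
  · rintro C ⟨i, hi, hC⟩
    exact (h𝒜 i hi).1 C hC
  · rintro C ⟨i, hi, hC⟩ C' ⟨j, hj, hC'⟩ hne
    by_cases hij : i = j
    · subst hij
      exact (h𝒜 i hi).2.1 hC hC' hne
    · refine (hYdisj i j hij).mono ?_ ?_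
      · rw [← (h𝒜 i hi).2.2]; exact Set.subset_sUnion_of_mem hC
      · rw [← (h𝒜 j hj).2.2]; exact Set.subset_sUnion_of_mem hC'
  · apply Set.Subset.antisymm
    · rintro x ⟨C, ⟨i, hi, hC⟩, hx⟩
      have : x ∈ Y i := by rw [← (h𝒜 i hi).2.2]; exact ⟨C, hC, hx⟩
      exact this.1.1
    · intro x hx
      have hne : {i | x ∈ Z i}.Nonempty := ⟨ox x, hox_mem x hx⟩
      let i := Ordinal.lt_wf.min {i | x ∈ Z i} hne
      have hi : x ∈ Z i := Ordinal.lt_wf.min_mem {i | x ∈ Z i} hne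
      have hile : i ≤ ox x :=
        not_lt.1 (Ordinal.lt_wf.not_lt_min {i | x ∈ Z i} (hox_mem x hx))
      have hiκ : i < κ.ord := hile.trans_lt (hXκ ▸ hox_lt x hx)
      have hxY : x ∈ Y i := by
        refine ⟨⟨hx, hi⟩, fun hxW => ?_⟩
        obtain ⟨j, hj, hxj⟩ := Set.mem_iUnion₂.1 hxW
        exact Ordinal.lt_wf.not_lt_min {i | x ∈ Z i} hxj hj
      rw [← (h𝒜 i hiκ).2.2] at hxY
      obtain ⟨C, hC, hxC⟩ := hxY
      exact ⟨C, ⟨i, hiκ, hC⟩, hxC⟩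

end FMEProof

/-- Every finitary finite-matching-extendable matroid is matchable. -/
theorem fme_matchable (M : Matroid α) [M.Finitary] (hfme : M.FME) : M.Matchable := by
  obtain ⟨𝒜, h1, h2, h3⟩ := FMEProof.main M _ M.E rfl (by
    intro 𝒜 hfin hC hdisj e he heA
    obtain ⟨C, h1, h2, h3⟩ := hfme 𝒜 hfin ⟨fun C h => (hC C h).1, hdisj⟩ e ⟨he, heA⟩
    exact ⟨C, h1, h2, h1.prop.subset_ground, Set.disjoint_iff_inter_eq_empty.2 h3⟩)
  exact ⟨𝒜, ⟨h1, h2⟩, h3⟩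
end

section
/- For every infinite cardinal λ, every finitary matroid M admits a λ-cocircuit faithful partition: a partition {F_i : i ∈ I} of the ground set E of M such that (i) |F_i| ≤ λ for every i ∈ I; (ii) every cocircuit D of the restriction M|F_i with |D| < λ is a cocircuit of M, for every i ∈ I; and (iii) every cocircuit D of M with |D| ≤ λ is contained in F_i for some i ∈ I. -/
open Set Function

universe u

variable {α : Type u}

namespace Lav
open Cardinal

lemma exists_idx (S : Set α) : ∃ f : α → Ordinal.{u}, InjOn f S ∧ Set.image f S = Iio (#S).ord := by
  have h : Cardinal.lift.{u+1} #S = Cardinal.lift.{u} #(Iio (#S).ord) := by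
    rw [Cardinal.mk_Iio_ordinal]; simp
  obtain ⟨e⟩ := Cardinal.lift_mk_eq'.1 h
  classical
  refine ⟨fun x ↦ if hx : x ∈ S then e ⟨x, hx⟩ else 0, ?_, ?_⟩
  · intro x hx y hy hxy
    simp only [hx, hy, dif_pos] at hxy
    have := e.injective (Subtype.ext hxy)
    simpa using this
  · ext o
    constructor
    · rintro ⟨x, hx, rfl⟩
      simp only [hx, dif_pos]
      exact (e ⟨x, hx⟩).2
    · intro ho
      refine ⟨e.symm ⟨o, ho⟩, (e.symm ⟨o, ho⟩).2, ?_⟩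
      simp

noncomputable def idx (S : Set α) : α → Ordinal.{u} := (exists_idx S).choose

lemma idx_injOn (S : Set α) : InjOn (idx S) S := (exists_idx S).choose_spec.1
lemma idx_image (S : Set α) : Set.image (idx S) S = Iio (#S).ord := (exists_idx S).choose_spec.2

/-- the first `o` many elements of `S` -/
def sub (S : Set α) (o : Ordinal.{u}) : Set α := {x ∈ S | idx S x < o}

lemma sub_subset (S : Set α) (o : Ordinal.{u}) : sub S o ⊆ S := fun _ h ↦ h.1

lemma sub_mono (S : Set α) {o o' : Ordinal.{u}} (h : o ≤ o') : sub S o ⊆ sub S o' :=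
  fun _ hx ↦ ⟨hx.1, hx.2.trans_le h⟩

lemma sub_card (S : Set α) (o : Ordinal.{u}) : #(sub S o) ≤ o.card := by
  have h : Cardinal.lift.{u+1} #(sub S o) ≤ Cardinal.lift.{u} #(Iio o) := by
    rw [Cardinal.lift_mk_le']
    refine ⟨⟨fun x ↦ ⟨idx S x, x.2.2⟩, ?_⟩⟩
    intro x y hxy
    exact Subtype.ext (idx_injOn S x.2.1 y.2.1 (congrArg Subtype.val hxy))
  rw [Cardinal.mk_Iio_ordinal] at h
  exact Cardinal.lift_le.1 (by simpa only [Cardinal.lift_lift, Cardinal.lift_umax] using h)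

lemma idx_lt {S : Set α} {x : α} (hx : x ∈ S) : idx S x < (#S).ord := by
  have := idx_image S ▸ mem_image_of_mem (idx S) hx
  exact this

lemma le_sub_card (S : Set α) (c : Cardinal.{u}) (hc : c ≤ #S) : c ≤ #(sub S c.ord) := by
  have h : Cardinal.lift.{u} #(Iio c.ord) ≤ Cardinal.lift.{u+1} #(sub S c.ord) := by
    rw [Cardinal.lift_mk_le']
    have : ∀ o : Iio c.ord, ∃ x ∈ S, idx S x = o := by
      rintro ⟨o, ho⟩
      have : o ∈ Set.image (idx S) S := by
        rw [idx_image]; exact lt_of_lt_of_le (mem_Iio.1 ho) (Cardinal.ord_le_ord.2 hc)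
      exact this
    choose g hg hg' using this
    refine ⟨⟨fun o ↦ ⟨g o, hg o, by rw [hg' o]; exact o.2⟩, ?_⟩⟩
    intro x y hxy
    apply Subtype.ext
    rw [← hg' x, ← hg' y]
    have : g x = g y := congrArg Subtype.val hxy
    rw [this]
  rw [Cardinal.mk_Iio_ordinal, Cardinal.card_ord] at h
  exact Cardinal.lift_le.1 (by simpa only [Cardinal.lift_lift, Cardinal.lift_umax] using h)

/-- avoidance -/
lemma exists_avoid {S : Set (Finset α)} (hS : S.PairwiseDisjoint id) (D : Set α) (h : #D < #S) :
    ∃ Q ∈ S, Disjoint (Q : Set α) D := by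
  by_contra! hcon
  have : ∀ Q : S, ∃ x : D, (x : α) ∈ Q.1 := by
    intro Q
    obtain ⟨x, hx, hx'⟩ := Set.not_disjoint_iff.1 (hcon Q Q.2)
    exact ⟨⟨x, hx'⟩, hx⟩
  choose g hg using this
  refine h.not_ge (Cardinal.mk_le_of_injective (f := g) ?_)
  intro Q Q' hQ
  by_contra hne
  have := hS Q.2 Q'.2 (fun h ↦ hne (Subtype.ext h))
  exact Finset.disjoint_left.1 this (hg Q) (hQ ▸ hg Q')

inductive Cl (base : Set α) (op : Finset α → α → Set α) : α → Prop
  | base {x} (hx : x ∈ base) : Cl base op x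
  | step {Z : Finset α} {i x : α} (hZ : ∀ z ∈ Z, Cl base op z) (hi : Cl base op i)
      (hx : x ∈ op Z i) : Cl base op x

lemma mk_finset_le (c : Cardinal.{u}) (hc : ℵ₀ ≤ c) (X : Set α) (hX : #X ≤ c) :
    #(Finset X) ≤ c := by
  rcases finite_or_infinite X with h | h
  · exact (Cardinal.lt_aleph0_of_finite _).le.trans hc
  · rwa [Cardinal.mk_finset_of_infinite]

lemma mk_iUnion_le_of {ι : Type u} (c : Cardinal.{u}) (hc : ℵ₀ ≤ c) (hι : #ι ≤ c) (f : ι → Set α)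
    (hf : ∀ i, #(f i) ≤ c) : #(⋃ i, f i) ≤ c := by
  refine (Cardinal.mk_iUnion_le f).trans ?_
  calc _ ≤ c * c := mul_le_mul' hι (ciSup_le' hf)
    _ = c := Cardinal.mul_eq_self hc

lemma Cl_card (base : Set α) (op : Finset α → α → Set α) (c : Cardinal.{u}) (hc : ℵ₀ ≤ c)
    (hb : #base ≤ c) (hop : ∀ Z i, #(op Z i) ≤ c) : #{x | Cl base op x} ≤ c := by
  classical
  let step : Set α → Set α := fun X ↦ X ∪ ⋃ p : Finset X × X, op (p.1.map (Embedding.subtype _)) p.2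
  let A : ℕ → Set α := fun n ↦ step^[n] base
  have hA0 : A 0 = base := rfl
  have hAs : ∀ n, A (n+1) = step (A n) := fun n ↦ by
    simp only [A, Function.iterate_succ_apply']
  have hmono : Monotone A := monotone_nat_of_le_succ (fun n ↦ by rw [hAs]; exact subset_union_left)
  have hcard : ∀ n, #(A n) ≤ c := by
    intro n
    induction n with
    | zero => exact hb
    | succ n ih =>
      rw [hAs]
      refine (Cardinal.mk_union_le _ _).trans (Cardinal.add_le_of_le hc ih ?_)
      refine mk_iUnion_le_of c hc ?_ _ (fun p ↦ hop _ _)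
      rw [Cardinal.mk_prod, Cardinal.lift_id, Cardinal.lift_id]
      exact (mul_le_mul' (mk_finset_le c hc _ ih) ih).trans (Cardinal.mul_eq_self hc).le
  have hsub : {x | Cl base op x} ⊆ ⋃ n : ULift.{u} ℕ, A n.down := by
    intro x hx
    induction hx with
    | base hx => exact mem_iUnion.2 ⟨⟨0⟩, hx⟩
    | @step Z i x hZ hi hx ihZ ihi =>
      simp only [mem_iUnion] at ihZ ihi ⊢
      have : ∃ n, ∀ z ∈ Z, z ∈ A n := by
        choose! f hf using ihZ
        refine ⟨Z.sup (fun z ↦ (f z).down), fun z hz ↦ hmono (Finset.le_sup (f := fun z ↦ (f z).down) hz) (hf z hz)⟩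
      obtain ⟨n, hn⟩ := this
      obtain ⟨m, hm⟩ := ihi
      refine ⟨⟨max n m.down + 1⟩, ?_⟩
      simp only [hAs]
      right
      have hZ' : ∀ z ∈ Z, z ∈ A (max n m.down) := fun z hz ↦ hmono (le_max_left _ _) (hn z hz)
      refine mem_iUnion.2 ⟨⟨Z.subtype (· ∈ A (max n m.down)), ⟨i, hmono (le_max_right _ _) hm⟩⟩, ?_⟩
      have : (Finset.subtype (· ∈ A (max n m.down)) Z).map (Embedding.subtype _) = Z := by
        rw [Finset.subtype_map]
        exact Finset.filter_true_of_mem hZ'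
      simp only
      rw [this]
      exact hx
  refine (Cardinal.mk_le_mk_of_subset hsub).trans (mk_iUnion_le_of c hc (by simpa using hc) _ (fun n ↦ hcard _))


def opA (Qf : Finset α → α → Set (Finset α)) (B : Set α) (o : Ordinal.{u}) (Z : Finset α) (i : α) :
    Set α :=
  {x | ∃ Q : Finset α, (Q ∈ sub (Qf Z i) o ∨ Q ∈ sub {Q ∈ Qf Z i | Disjoint (Q : Set α) B} o) ∧ x ∈ Q}

lemma opA_card (Qf : Finset α → α → Set (Finset α)) (B : Set α) (o : Ordinal.{u}) (c : Cardinal.{u})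
    (hc : ℵ₀ ≤ c) (ho : o.card ≤ c) (Z : Finset α) (i : α) : #(opA Qf B o Z i) ≤ c := by
  have h : opA Qf B o Z i ⊆ (⋃ Q : sub (Qf Z i) o, (Q.1 : Set α)) ∪
      (⋃ Q : sub {Q ∈ Qf Z i | Disjoint (Q : Set α) B} o, (Q.1 : Set α)) := by
    rintro x ⟨Q, hQ | hQ, hx⟩
    · exact Or.inl (mem_iUnion.2 ⟨⟨Q, hQ⟩, hx⟩)
    · exact Or.inr (mem_iUnion.2 ⟨⟨Q, hQ⟩, hx⟩)
  refine (Cardinal.mk_le_mk_of_subset h).trans ((Cardinal.mk_union_le _ _).trans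
    (Cardinal.add_le_of_le hc ?_ ?_))
  all_goals
    refine mk_iUnion_le_of c hc ((sub_card _ _).trans ho) _ fun Q ↦ ?_
    exact (Cardinal.lt_aleph0_of_finite _).le.trans hc

noncomputable def A (E : Set α) (θ : Cardinal.{u}) (Qf : Finset α → α → Set (Finset α))
    (a : Ordinal.{u}) : Set α :=
  {x | Cl ((⋃ b, ⋃ (_ : b < a), A E θ Qf b) ∪ sub E (a + 1))
    (opA Qf (⋃ b, ⋃ (_ : b < a), A E θ Qf b) (max (a + 1) θ.ord)) x}
termination_by a

def B (E : Set α) (θ : Cardinal.{u}) (Qf : Finset α → α → Set (Finset α))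
    (a : Ordinal.{u}) : Set α := ⋃ b, ⋃ (_ : b < a), A E θ Qf b

section
variable {E : Set α} {θ : Cardinal.{u}} {Qf : Finset α → α → Set (Finset α)}

lemma A_eq (a : Ordinal.{u}) : A E θ Qf a = {x | Cl (B E θ Qf a ∪ sub E (a + 1))
    (opA Qf (B E θ Qf a) (max (a + 1) θ.ord)) x} := by
  rw [A]; rfl

lemma mem_B {a : Ordinal.{u}} {x : α} : x ∈ B E θ Qf a ↔ ∃ b < a, x ∈ A E θ Qf b := by
  simp [B]

lemma B_subset_A (a : Ordinal.{u}) : B E θ Qf a ⊆ A E θ Qf a := by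
  intro x hx
  rw [A_eq]
  exact Cl.base (Or.inl hx)

lemma A_mono {a b : Ordinal.{u}} (h : a ≤ b) : A E θ Qf a ⊆ A E θ Qf b := by
  rcases h.eq_or_lt with rfl | h
  · rfl
  · exact fun x hx ↦ B_subset_A b (mem_B.2 ⟨a, h, hx⟩)

lemma A_subset (hQ : ∀ Z i, ∀ Q ∈ Qf Z i, (Q : Set α) ⊆ E) (a : Ordinal.{u}) : A E θ Qf a ⊆ E := by
  induction a using WellFoundedLT.induction with
  | ind a ih =>
    intro x hx
    rw [A_eq] at hx
    induction hx with
    | base hx =>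
      rcases hx with hx | hx
      · obtain ⟨b, hb, hx⟩ := mem_B.1 hx
        exact ih b hb hx
      · exact hx.1
    | step hZ hi hx =>
      obtain ⟨Q, hQ' | hQ', hx⟩ := hx
      · exact hQ _ _ Q hQ'.1 hx
      · exact hQ _ _ Q hQ'.1.1 hx

lemma card_succ_le (hθ : ℵ₀ ≤ θ) (a : Ordinal.{u}) : (a + 1).card ≤ max θ a.card := by
  rw [Ordinal.card_add, Ordinal.card_one]
  exact Cardinal.add_le_of_le (hθ.trans (le_max_left _ _)) (le_max_right _ _)
    (Cardinal.one_le_aleph0.trans (hθ.trans (le_max_left _ _)))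

lemma B_card_of (hθ : ℵ₀ ≤ θ) (a : Ordinal.{u})
    (h : ∀ b < a, #(A E θ Qf b) ≤ max θ b.card) : #(B E θ Qf a) ≤ max θ a.card := by
  refine Cardinal.mk_biUnion_le_of_le (le_max_right _ _) (hθ.trans (le_max_left _ _)) _ ?_
  intro b hb
  exact (h b hb).trans (max_le_max le_rfl (Ordinal.card_le_card hb.le))

lemma A_card (hθ : ℵ₀ ≤ θ) (a : Ordinal.{u}) : #(A E θ Qf a) ≤ max θ a.card := by
  induction a using WellFoundedLT.induction with
  | ind a ih =>
    rw [A_eq]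
    have hc := hθ.trans (le_max_left θ a.card)
    refine Cl_card _ _ _ hc ?_ ?_
    · refine (Cardinal.mk_union_le _ _).trans (Cardinal.add_le_of_le hc (B_card_of hθ a ih) ?_)
      exact (sub_card _ _).trans (card_succ_le hθ a)
    · refine opA_card _ _ _ _ hc ?_
      rcases max_choice (a + 1) θ.ord with h | h <;> rw [h]
      · exact card_succ_le hθ a
      · simp

lemma B_card (hθ : ℵ₀ ≤ θ) (a : Ordinal.{u}) : #(B E θ Qf a) ≤ max θ a.card :=
  B_card_of hθ a fun b _ ↦ A_card hθ b

lemma exists_A {x : α} (hx : x ∈ E) : ∃ a < (#E).ord, x ∈ A E θ Qf a := by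
  refine ⟨idx E x, idx_lt hx, ?_⟩
  rw [A_eq]
  exact Cl.base (Or.inr ⟨hx, Order.lt_add_one_iff.2 le_rfl⟩)

lemma A_step1 {a : Ordinal.{u}} {Z : Finset α} {i : α} (hZ : (Z : Set α) ⊆ A E θ Qf a)
    (hi : i ∈ A E θ Qf a) {Q : Finset α} (hQ : Q ∈ sub (Qf Z i) (max (a + 1) θ.ord)) :
    (Q : Set α) ⊆ A E θ Qf a := by
  intro x hx
  rw [A_eq] at hZ hi ⊢
  exact Cl.step (fun z hz ↦ hZ hz) hi ⟨Q, Or.inl hQ, hx⟩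

lemma A_step2 {a : Ordinal.{u}} {Z : Finset α} {i : α} (hZ : (Z : Set α) ⊆ A E θ Qf a)
    (hi : i ∈ A E θ Qf a) {Q : Finset α}
    (hQ : Q ∈ sub {Q ∈ Qf Z i | Disjoint (Q : Set α) (B E θ Qf a)} (max (a + 1) θ.ord)) :
    (Q : Set α) ⊆ A E θ Qf a := by
  intro x hx
  rw [A_eq] at hZ hi ⊢
  exact Cl.step (fun z hz ↦ hZ hz) hi ⟨Q, Or.inr hQ, hx⟩

lemma idx_lt_of_card {S : Set (Finset α)} {a : Ordinal.{u}} (h : #S ≤ max θ a.card) {Q : Finset α}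
    (hQ : Q ∈ S) : idx S Q < max a θ.ord := by
  refine (idx_lt hQ).trans_le ?_
  rcases le_max_iff.1 h with h | h
  · exact (Cardinal.ord_le_ord.2 h).trans (le_max_right _ _)
  · exact ((Cardinal.ord_le_ord.2 h).trans (Cardinal.ord_card_le a)).trans (le_max_left _ _)

lemma A_closed {a : Ordinal.{u}} {Z : Finset α} {i : α} (hZ : (Z : Set α) ⊆ A E θ Qf a)
    (hi : i ∈ A E θ Qf a) (h : #(Qf Z i) ≤ max θ a.card) {Q : Finset α} (hQ : Q ∈ Qf Z i) :
    (Q : Set α) ⊆ A E θ Qf a := by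
  refine A_step1 hZ hi ⟨hQ, (idx_lt_of_card h hQ).trans_le (max_le_max ?_ le_rfl)⟩
  exact (Order.lt_add_one_iff.2 le_rfl).le

lemma B_closed {a : Ordinal.{u}} {Z : Finset α} {i : α} (hZ : (Z : Set α) ⊆ B E θ Qf a)
    (hi : i ∈ B E θ Qf a) (h : #(Qf Z i) ≤ max θ a.card) {Q : Finset α} (hQ : Q ∈ Qf Z i) :
    (Q : Set α) ⊆ B E θ Qf a := by
  classical
  obtain ⟨b, hb, hib⟩ := mem_B.1 hi
  have hZb : ∃ b < a, (Z : Set α) ⊆ A E θ Qf b := by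
    have : ∀ z ∈ Z, ∃ c < a, z ∈ A E θ Qf c := fun z hz ↦ mem_B.1 (hZ hz)
    clear hQ h hZ
    induction Z using Finset.induction_on with
    | empty => exact ⟨b, hb, by simp⟩
    | insert z Z hz ih =>
      obtain ⟨c, hc, hcZ⟩ := ih (fun y hy ↦ this y (Finset.mem_insert_of_mem hy))
      obtain ⟨d, hd, hdz⟩ := this z (Finset.mem_insert_self _ _)
      refine ⟨max c d, max_lt hc hd, ?_⟩
      rw [Finset.coe_insert]
      exact insert_subset (A_mono (le_max_right _ _) hdz) (hcZ.trans (A_mono (le_max_left _ _)))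
  obtain ⟨b', hb', hZb'⟩ := hZb
  have hlt := idx_lt_of_card h hQ
  have : ∃ d < a, idx (Qf Z i) Q < max (d + 1) θ.ord := by
    rcases lt_max_iff.1 hlt with h | h
    · exact ⟨_, h, lt_max_of_lt_left (Order.lt_add_one_iff.2 le_rfl)⟩
    · exact ⟨b, hb, lt_max_of_lt_right h⟩
  obtain ⟨d, hd, hlt⟩ := this
  have hm : max (max b b') d < a := max_lt (max_lt hb hb') hd
  intro x hx
  refine mem_B.2 ⟨_, hm, A_step1 (hZb'.trans (A_mono ?_)) (A_mono ?_ hib) ⟨hQ, hlt.trans_le ?_⟩ hx⟩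
  · exact (le_max_right _ _).trans (le_max_left _ _)
  · exact (le_max_left _ _).trans (le_max_left _ _)
  · refine max_le_max ?_ le_rfl
    gcongr
    exact le_max_right _ _

lemma A_many {a : Ordinal.{u}} {Z : Finset α} {i : α} (hZ : (Z : Set α) ⊆ A E θ Qf a)
    (hi : i ∈ A E θ Qf a) (h : θ ≤ #(Qf Z i)) :
    θ ≤ #{Q ∈ Qf Z i | (Q : Set α) ⊆ A E θ Qf a} := by
  refine (le_sub_card _ _ h).trans (Cardinal.mk_le_mk_of_subset ?_)
  intro Q hQ
  exact ⟨hQ.1, A_step1 hZ hi (sub_mono _ (le_max_right _ _) hQ)⟩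

lemma A_many2 {a : Ordinal.{u}} {Z : Finset α} {i : α} (hZ : (Z : Set α) ⊆ A E θ Qf a)
    (hi : i ∈ A E θ Qf a) (h : θ ≤ #{Q ∈ Qf Z i | Disjoint (Q : Set α) (B E θ Qf a)}) :
    θ ≤ #{Q ∈ Qf Z i | Disjoint (Q : Set α) (B E θ Qf a) ∧ (Q : Set α) ⊆ A E θ Qf a} := by
  refine (le_sub_card _ _ h).trans (Cardinal.mk_le_mk_of_subset ?_)
  intro Q hQ
  exact ⟨hQ.1.1, hQ.1.2, A_step2 hZ hi (sub_mono _ (le_max_right _ _) hQ)⟩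

end

lemma cocircuit_iff {M : Matroid α} {D : Set α} :
    M✶.IsCircuit D ↔ D ⊆ M.E ∧ D.Nonempty ∧ (∀ e ∈ D, e ∉ M.closure (M.E \ D)) ∧
      ∀ f ∈ D, M.E ⊆ M.closure (insert f (M.E \ D)) := by
  constructor
  · intro h
    have hE : D ⊆ M.E := h.subset_ground
    refine ⟨hE, h.nonempty, ?_, ?_⟩
    · intro e he hcl
      have hm := M.isCocircuit_iff_minimal_compl_nonspanning.1 h
      have h1 : ¬ M.Spanning (M.E \ (D \ {e})) := by
        intro hs
        apply hm.prop
        have hh : M.E \ (D \ {e}) = insert e (M.E \ D) := by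
          ext x; by_cases hx : x = e
          · subst hx; simp [hE he]
          · simp [hx]
        rw [hh, Matroid.spanning_iff_ground_subset_closure] at hs
        rw [Matroid.spanning_iff_ground_subset_closure]
        rwa [Matroid.closure_insert_eq_of_mem_closure hcl] at hs
      have := hm.le_of_le h1 sdiff_subset he
      simp at this
    · intro f hf
      have hm := M.isCocircuit_iff_minimal_compl_nonspanning.1 h
      by_contra hcon
      have h1 : ¬ M.Spanning (M.E \ (D \ {f})) := by
        intro hs
        apply hcon
        refine hs.closure_eq.symm.subset.trans (M.closure_subset_closure ?_)
        rintro x ⟨hx, hx'⟩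
        by_cases hxf : x = f
        · simp [hxf]
        · simp only [mem_sdiff, mem_singleton_iff, not_and, not_not] at hx'
          right
          exact ⟨hx, fun h ↦ hxf (hx' h)⟩
      have := hm.le_of_le h1 sdiff_subset hf
      simp at this
  · rintro ⟨hE, ⟨e, he⟩, h1, h2⟩
    refine M.isCocircuit_iff_minimal_compl_nonspanning.2 ⟨?_, ?_⟩
    · intro hs
      exact h1 e he (hs.closure_eq.symm ▸ hE he)
    · intro D' hD' hsub f hf
      by_contra hfD'
      apply hD'
      rw [Matroid.spanning_iff_ground_subset_closure]
      refine (h2 f hf).trans (M.closure_subset_closure ?_)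
      exact insert_subset ⟨hE hf, hfD'⟩ (sdiff_subset_sdiff_right hsub)

lemma cocircuit_of_restrict {M : Matroid α} {F D : Set α} (hF : F ⊆ M.E)
    (hD : (M.restrict F)✶.IsCircuit D) (h : ∀ e ∈ D, e ∉ M.closure (M.E \ D)) : M✶.IsCircuit D := by
  obtain ⟨h1, h2, -, h4⟩ := cocircuit_iff.1 hD
  have hDF : D ⊆ F := h1
  refine cocircuit_iff.2 ⟨hDF.trans hF, h2, h, fun f hf ↦ ?_⟩
  have := h4 f hf
  rw [Matroid.restrict_ground_eq, Matroid.restrict_closure_eq _ (insert_subset (hDF hf) sdiff_subset) hF] at this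
  have hmono : M.closure (insert f (F \ D)) ⊆ M.closure (insert f (M.E \ D)) :=
    M.closure_subset_closure (insert_subset_insert (sdiff_subset_sdiff_left hF))
  intro x hx
  by_cases hxD : x ∈ D
  · exact hmono (this (hDF hxD)).1
  · exact M.mem_closure_of_mem' (Or.inr ⟨hx, hxD⟩) hx

lemma restrict_cocircuit_not_mem {M : Matroid α} {F D : Set α} (hF : F ⊆ M.E)
    (hD : (M.restrict F)✶.IsCircuit D) : ∀ e ∈ D, e ∉ M.closure (F \ D) := by
  obtain ⟨h1, h2, h3, h4⟩ := cocircuit_iff.1 hD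
  intro e he hcl
  apply h3 e he
  rw [Matroid.restrict_ground_eq, Matroid.restrict_closure_eq _ sdiff_subset hF]
  exact ⟨hcl, h1 he⟩

lemma exists_restrict_cocircuit {M : Matroid α} {F D : Set α} (hF : F ⊆ M.E) (hDF : D ⊆ F)
    (hD : M✶.IsCircuit D) : ∃ D' ⊆ D, (M.restrict F)✶.IsCircuit D' := by
  obtain ⟨h1, ⟨e, he⟩, h3, h4⟩ := cocircuit_iff.1 hD
  have : (M.restrict F)✶.Dep D := by
    rw [← Matroid.not_indep_iff (by simpa using hDF), ← Matroid.coindep_def, Matroid.coindep_iff_closure_compl_eq_ground (by simpa using hDF)]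
    intro hcon
    rw [Matroid.restrict_ground_eq, Matroid.restrict_closure_eq _ sdiff_subset hF] at hcon
    have : e ∈ M.closure (F \ D) ∩ F := by rw [hcon]; exact hDF he
    exact h3 e he (M.closure_subset_closure (sdiff_subset_sdiff_left hF) this.1)
  exact this.exists_isCircuit_subset

lemma exchange {M : Matroid α} {H : Set α} {e : α} (he : e ∉ M.closure H) (I : Finset α) 
    (h : e ∈ M.closure (H ∪ I)) : ∃ (Z : Finset α) (i : α), Z ⊆ I ∧ i ∈ I ∧
      i ∉ M.closure (H ∪ Z) ∧ i ∈ M.closure (insert e (H ∪ Z)) := by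
  classical
  induction I using Finset.induction_on with
  | empty => simp at h; contradiction
  | insert a I ha ih =>
    by_cases h' : e ∈ M.closure (H ∪ I)
    · obtain ⟨Z, i, h1, h2, h3⟩ := ih h'
      exact ⟨Z, i, h1.trans (Finset.subset_insert _ _), Finset.mem_insert_of_mem h2, h3⟩
    · have h : e ∈ M.closure (insert a (H ∪ I)) := by
        simpa [Set.union_insert] using h
      have hx := M.mem_closure_insert h' h
      refine ⟨I, a, Finset.subset_insert _ _, Finset.mem_insert_self _ _, ?_, hx⟩
      intro hcon
      rw [Matroid.closure_insert_eq_of_mem_closure hcon] at h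
      exact h' h


def Cand (M : Matroid α) (Z : Finset α) (i : α) : Set (Finset α) :=
  {Q | Q.Nonempty ∧ (Q : Set α) ⊆ M.E ∧ i ∈ M.closure (Q ∪ Z)}

lemma exists_family (C : Set (Finset α)) (hC : ∀ Q ∈ C, Q.Nonempty) :
    ∃ S ⊆ C, S.PairwiseDisjoint id ∧ ∀ Q ∈ C, ∃ Q' ∈ S, ¬ Disjoint Q Q' := by
  obtain ⟨S, hS⟩ := zorn_subset {S : Set (Finset α) | S ⊆ C ∧ S.PairwiseDisjoint id} (by
    intro c hc hchain
    refine ⟨⋃₀ c, ⟨sUnion_subset fun s hs ↦ (hc hs).1, ?_⟩, fun s hs ↦ subset_sUnion_of_mem hs⟩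
    exact (pairwiseDisjoint_sUnion hchain.directedOn).2 fun s hs ↦ (hc hs).2)
  refine ⟨S, hS.prop.1, hS.prop.2, fun Q hQ ↦ ?_⟩
  by_contra! hcon
  have h1 : insert Q S ∈ {S : Set (Finset α) | S ⊆ C ∧ S.PairwiseDisjoint id} :=
    ⟨insert_subset hQ hS.prop.1, hS.prop.2.insert fun Q' hQ' _ ↦ hcon Q' hQ'⟩
  have h2 : Q ∈ S := hS.le_of_ge h1 (subset_insert _ _) (mem_insert _ _)
  have h3 := hcon Q h2
  rw [disjoint_self] at h3
  exact (hC Q hQ).ne_empty h3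

lemma chain (M : Matroid α) [M.Finitary] (θ : Cardinal.{u}) (hθ : ℵ₀ ≤ θ) (hE : θ < #M.E) :
    ∃ P : Set (Set α), ⋃₀ P = M.E ∧ P.Pairwise Disjoint ∧ (∀ F ∈ P, #F < #M.E) ∧
      (∀ F ∈ P, ∀ D : Set α, (M.restrict F)✶.IsCircuit D → #D < θ → M✶.IsCircuit D) ∧
      (∀ D : Set α, M✶.IsCircuit D → #D ≤ θ → ∃ F ∈ P, D ⊆ F) := by
  classical
  choose Qf hQC hQd hQm using fun (Z : Finset α) (i : α) ↦
    exists_family (Cand M Z i) (fun Q hQ ↦ hQ.1)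
  have hQE : ∀ Z i, ∀ Q ∈ Qf Z i, (Q : Set α) ⊆ M.E := fun Z i Q hQ ↦ (hQC Z i hQ).2.1
  have hAE := A_subset (θ := θ) hQE
  have hBE : ∀ a, B M.E θ Qf a ⊆ M.E := fun a ↦ (B_subset_A a).trans (hAE a)
  have keyA : ∀ a (Z : Finset α) (i : α) (Q : Set α), (Z : Set α) ⊆ A M.E θ Qf a →
      i ∈ A M.E θ Qf a → Q.Finite → Q.Nonempty → Q ⊆ M.E → Disjoint Q (A M.E θ Qf a) →
      i ∈ M.closure (Q ∪ Z) → max θ a.card < #(Qf Z i) := by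
    intro a Z i Q hZ hi hfin hne hQ hdj hcl
    by_contra! hcon
    lift Q to Finset α using hfin
    obtain ⟨Q', hQ', hnd⟩ := hQm Z i Q ⟨by simpa using hne, hQ, hcl⟩
    apply hnd
    rw [← Finset.disjoint_coe]
    exact hdj.mono_right (A_closed hZ hi hcon hQ')
  have keyB : ∀ a (Z : Finset α) (i : α) (Q : Set α), (Z : Set α) ⊆ B M.E θ Qf a →
      i ∈ B M.E θ Qf a → Q.Finite → Q.Nonempty → Q ⊆ M.E → Disjoint Q (B M.E θ Qf a) →
      i ∈ M.closure (Q ∪ Z) → max θ a.card < #(Qf Z i) := by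
    intro a Z i Q hZ hi hfin hne hQ hdj hcl
    by_contra! hcon
    lift Q to Finset α using hfin
    obtain ⟨Q', hQ', hnd⟩ := hQm Z i Q ⟨by simpa using hne, hQ, hcl⟩
    apply hnd
    rw [← Finset.disjoint_coe]
    exact hdj.mono_right (B_closed hZ hi hcon hQ')
  have split : ∀ a (D : Set α), M✶.IsCircuit D → #D ≤ θ → (D ∩ A M.E θ Qf a).Nonempty →
      D ⊆ A M.E θ Qf a := by
    rintro a D hD hDθ ⟨e, heD, heA⟩ f hfD
    by_contra hfA
    obtain ⟨h1, -, h3, h4⟩ := cocircuit_iff.1 hD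
    obtain ⟨J, hJ, hJfin, -, heJ⟩ := Matroid.exists_mem_finite_closure_of_mem_closure
      (h4 f hfD (h1 heD))
    have hJE : J ⊆ M.E := hJ.trans (insert_subset (h1 hfD) sdiff_subset)
    have hZfin : (J ∩ A M.E θ Qf a).Finite := hJfin.inter_of_left _
    obtain ⟨Z, hZ⟩ := hZfin.exists_finset_coe
    have hZD : (Z : Set α) ⊆ M.E \ D := by
      rw [hZ]
      rintro x ⟨hx, hxA⟩
      rcases hJ hx with rfl | h
      · exact (hfA hxA).elim
      · exact h
    have hJu : J \ A M.E θ Qf a ∪ Z = J := by rw [hZ]; exact sdiff_union_inter _ _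
    have hne : (J \ A M.E θ Qf a).Nonempty := by
      by_contra hcon
      rw [not_nonempty_iff_eq_empty] at hcon
      rw [hcon, empty_union] at hJu
      exact h3 e heD (M.closure_subset_closure hZD (hJu ▸ heJ))
    have hlt := keyA a Z e (J \ A M.E θ Qf a) (by rw [hZ]; exact inter_subset_right) heA
      hJfin.sdiff hne (sdiff_subset.trans hJE) disjoint_sdiff_left (by rwa [hJu])
    obtain ⟨Q, hQ, hQD⟩ := exists_avoid (hQd Z e) D
      ((hDθ.trans (le_max_left _ _)).trans_lt hlt)
    refine h3 e heD (M.closure_subset_closure ?_ (hQC Z e hQ).2.2)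
    exact union_subset (subset_sdiff.2 ⟨hQE _ _ Q hQ, hQD⟩) hZD
  have faith : ∀ a (D : Set α), (M.restrict (A M.E θ Qf a \ B M.E θ Qf a))✶.IsCircuit D →
      #D < θ → M✶.IsCircuit D := by
    intro a D hD hDθ
    have hFE : A M.E θ Qf a \ B M.E θ Qf a ⊆ M.E := sdiff_subset.trans (hAE a)
    have hDF : D ⊆ A M.E θ Qf a \ B M.E θ Qf a := hD.subset_ground
    refine cocircuit_of_restrict hFE hD ?_
    intro e he hcl
    have hnot := restrict_cocircuit_not_mem hFE hD e he
    have hcl1 : e ∈ M.closure (A M.E θ Qf a \ D) := by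
      obtain ⟨J, hJ, hJfin, -, heJ⟩ := Matroid.exists_mem_finite_closure_of_mem_closure hcl
      have hZfin : (J ∩ A M.E θ Qf a).Finite := hJfin.inter_of_left _
      obtain ⟨Z, hZ⟩ := hZfin.exists_finset_coe
      have hZD : (Z : Set α) ⊆ A M.E θ Qf a \ D := by
        rw [hZ]
        rintro x ⟨hx, hxA⟩
        exact ⟨hxA, (hJ hx).2⟩
      have hJu : J \ A M.E θ Qf a ∪ Z = J := by rw [hZ]; exact sdiff_union_inter _ _
      rcases (J \ A M.E θ Qf a).eq_empty_or_nonempty with hcon | hne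
      · rw [hcon, empty_union] at hJu
        exact M.closure_subset_closure hZD (hJu ▸ heJ)
      have hlt := keyA a Z e (J \ A M.E θ Qf a) (hZD.trans sdiff_subset) (hDF he).1
        hJfin.sdiff hne (sdiff_subset.trans (hJ.trans sdiff_subset)) disjoint_sdiff_left
        (by rwa [hJu])
      have hmany := A_many (hZD.trans sdiff_subset) (hDF he).1 ((le_max_left _ _).trans hlt.le)
      obtain ⟨Q, hQ, hQD⟩ := exists_avoid ((hQd Z e).subset (fun Q hQ ↦ hQ.1)) D
        (hDθ.trans_le hmany)
      refine M.closure_subset_closure ?_ (hQC Z e hQ.1).2.2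
      exact union_subset (subset_sdiff.2 ⟨hQ.2, hQD⟩) hZD
    obtain ⟨J, hJ, hJfin, -, heJ⟩ := Matroid.exists_mem_finite_closure_of_mem_closure hcl1
    have hIfin : (J ∩ B M.E θ Qf a).Finite := hJfin.inter_of_left _
    obtain ⟨I, hI⟩ := hIfin.exists_finset_coe
    have heI : e ∈ M.closure (((A M.E θ Qf a \ B M.E θ Qf a) \ D) ∪ I) := by
      refine M.closure_subset_closure ?_ heJ
      intro x hx
      by_cases hxB : x ∈ B M.E θ Qf a
      · right; rw [hI]; exact ⟨hx, hxB⟩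
      · left; exact ⟨⟨(hJ hx).1, hxB⟩, (hJ hx).2⟩
    obtain ⟨Z, i, hZI, hiI, hi1, hi2⟩ := exchange hnot I heI
    have hIB : (I : Set α) ⊆ B M.E θ Qf a := by rw [hI]; exact inter_subset_right
    have hZB : (Z : Set α) ⊆ B M.E θ Qf a := fun x hx ↦ hIB (hZI hx)
    have hiB : i ∈ B M.E θ Qf a := hIB hiI
    obtain ⟨J', hJ', hJ'fin, -, hiJ'⟩ := Matroid.exists_mem_finite_closure_of_mem_closure hi2
    have hQ0F : J' \ Z ⊆ A M.E θ Qf a \ B M.E θ Qf a := by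
      rintro x ⟨hx, hxZ⟩
      rcases hJ' hx with rfl | h | h
      · exact hDF he
      · exact h.1
      · exact (hxZ h).elim
    have hcl0 : i ∈ M.closure (J' \ Z ∪ Z) :=
      M.closure_subset_closure (by rw [sdiff_union_self]; exact subset_union_left) hiJ'
    have hne : (J' \ (Z : Set α)).Nonempty := by
      by_contra hcon
      rw [not_nonempty_iff_eq_empty] at hcon
      rw [hcon, empty_union] at hcl0
      exact hi1 (M.closure_subset_closure subset_union_right hcl0)
    have hlt := keyB a Z i (J' \ Z) hZB hiB hJ'fin.sdiff hne (hQ0F.trans hFE)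
      (disjoint_left.2 fun x hx ↦ (hQ0F hx).2) hcl0
    have hmany0 : θ ≤ #{Q ∈ Qf Z i | Disjoint (Q : Set α) (B M.E θ Qf a)} := by
      by_contra! hcon
      let S' : Set (Finset α) := {Q ∈ Qf Z i | ¬ Disjoint (Q : Set α) (B M.E θ Qf a)}
      have hS' : #S' ≤ max θ a.card := by
        by_contra! hS'
        obtain ⟨Q, hQ, hQB⟩ := exists_avoid (S := S') ((hQd Z i).subset (fun Q hQ ↦ hQ.1))
          (B M.E θ Qf a) ((B_card hθ a).trans_lt hS')
        exact hQ.2 hQB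
      refine hlt.not_ge ?_
      have hu : Qf Z i ⊆ {Q ∈ Qf Z i | Disjoint (Q : Set α) (B M.E θ Qf a)} ∪ S' := by
        intro Q hQ
        by_cases h : Disjoint (Q : Set α) (B M.E θ Qf a)
        · exact Or.inl ⟨hQ, h⟩
        · exact Or.inr ⟨hQ, h⟩
      exact (Cardinal.mk_le_mk_of_subset hu).trans ((Cardinal.mk_union_le _ _).trans
        (Cardinal.add_le_of_le (hθ.trans (le_max_left _ _)) (hcon.le.trans (le_max_left _ _)) hS'))
    have hmany := A_many2 (hZB.trans (B_subset_A a)) (B_subset_A a hiB) hmany0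
    obtain ⟨Q, hQ, hQD⟩ := exists_avoid ((hQd Z i).subset (fun Q hQ ↦ hQ.1)) D
        (hDθ.trans_le hmany)
    refine hi1 (M.closure_subset_closure ?_ (hQC Z i hQ.1).2.2)
    exact union_subset_union_left _
      (subset_sdiff.2 ⟨subset_sdiff.2 ⟨hQ.2.2, hQ.2.1⟩, hQD⟩)
  have hmin : ∀ x ∈ M.E, ∃ a < (#M.E).ord, x ∈ A M.E θ Qf a \ B M.E θ Qf a := by
    intro x hx
    obtain ⟨a, ha, hxa⟩ := exists_A (θ := θ) (Qf := Qf) hx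
    induction a using WellFoundedLT.induction with
    | ind a ih =>
      by_cases h : x ∈ B M.E θ Qf a
      · obtain ⟨b, hb, hxb⟩ := mem_B.1 h
        exact ih b hb (hb.trans ha) hxb
      · exact ⟨a, ha, hxa, h⟩
  refine ⟨Set.image (fun a ↦ A M.E θ Qf a \ B M.E θ Qf a) (Iio (#M.E).ord), ?_, ?_, ?_, ?_, ?_⟩
  · apply subset_antisymm
    · rintro x ⟨_, ⟨a, ha, rfl⟩, hx⟩
      exact hAE a hx.1
    · intro x hx
      obtain ⟨a, ha, hxa⟩ := hmin x hx
      exact ⟨_, ⟨a, ha, rfl⟩, hxa⟩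
  · rintro _ ⟨a, ha, rfl⟩ _ ⟨b, hb, rfl⟩ hne
    have aux : ∀ a b, a < b → Disjoint (A M.E θ Qf a \ B M.E θ Qf a)
        (A M.E θ Qf b \ B M.E θ Qf b) := by
      intro a b hab
      rw [disjoint_left]
      rintro x ⟨hx, -⟩ ⟨-, hx'⟩
      exact hx' (mem_B.2 ⟨a, hab, hx⟩)
    rcases lt_trichotomy a b with h | h | h
    · exact aux a b h
    · exact (hne (by rw [h])).elim
    · exact (aux b a h).symm
  · rintro _ ⟨a, ha, rfl⟩
    refine (Cardinal.mk_le_mk_of_subset sdiff_subset).trans_lt ((A_card hθ a).trans_lt ?_)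
    exact max_lt hE (Cardinal.lt_ord.1 ha)
  · rintro _ ⟨a, ha, rfl⟩ D hD hDθ
    exact faith a D hD hDθ
  · intro D hD hDθ
    have h1 : D ⊆ M.E := hD.subset_ground
    have hex : ∃ a, a < (#M.E).ord ∧ (D ∩ A M.E θ Qf a).Nonempty := by
      obtain ⟨e, he⟩ := hD.nonempty
      obtain ⟨a, ha, hea⟩ := hmin e (h1 he)
      exact ⟨a, ha, e, he, hea.1⟩
    obtain ⟨a, ⟨ha, hDa⟩, hamin⟩ := WellFounded.has_min (wellFounded_lt (α := Ordinal.{u}))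
      {a | a < (#M.E).ord ∧ (D ∩ A M.E θ Qf a).Nonempty} hex
    refine ⟨_, ⟨a, ha, rfl⟩, subset_sdiff.2 ⟨split a D hD hDθ hDa, ?_⟩⟩
    rw [disjoint_left]
    intro x hxD hxB
    obtain ⟨b, hb, hxb⟩ := mem_B.1 hxB
    exact hamin b ⟨hb.trans ha, x, hxD, hxb⟩ hb

theorem main (lam : Cardinal.{u}) (hlam : ℵ₀ ≤ lam) (κ : Cardinal.{u}) :
    ∀ (M : Matroid α) [M.Finitary], #M.E = κ → 
    ∃ P : Set (Set α), ⋃₀ P = M.E ∧ P.Pairwise Disjoint ∧ (∀ F ∈ P, #F ≤ lam) ∧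
      (∀ F ∈ P, ∀ D : Set α, (M.restrict F)✶.IsCircuit D → #D < lam → M✶.IsCircuit D) ∧
      (∀ D : Set α, M✶.IsCircuit D → #D ≤ lam → ∃ F ∈ P, D ⊆ F) := by
  induction κ using WellFoundedLT.induction with
  | ind κ ih =>
  intro M hM hκ
  rcases le_or_gt (#M.E) lam with h | h
  · refine ⟨{M.E}, by simp, by simp, by simpa using h, ?_, ?_⟩
    · rintro F rfl D hD -
      rwa [Matroid.restrict_ground_eq_self] at hD
    · intro D hD _
      exact ⟨_, rfl, hD.subset_ground⟩
  rcases le_or_gt (#M.E) (Order.succ lam) with h' | h'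
  · obtain ⟨P, h1, h2, h3, h4, h5⟩ := chain M lam hlam h
    exact ⟨P, h1, h2, fun F hF ↦ Order.lt_succ_iff.1 ((h3 F hF).trans_le h'), h4, h5⟩
  · obtain ⟨P, h1, h2, h3, h4, h5⟩ := chain M (Order.succ lam) (hlam.trans (Order.le_succ _)) h'
    have hPE : ∀ F ∈ P, F ⊆ M.E := fun F hF ↦ h1 ▸ subset_sUnion_of_mem hF
    have := fun F : P ↦ ih _ (hκ ▸ h3 F F.2) (M.restrict F) rfl
    choose R r1 r2 r3 r4 r5 using this
    simp only [Matroid.restrict_ground_eq] at r1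
    have hRF : ∀ F, ∀ G ∈ R F, G ⊆ F.1 := fun F G hG ↦
      (subset_sUnion_of_mem hG).trans (r1 F).subset
    refine ⟨⋃ F, R F, ?_, ?_, ?_, ?_, ?_⟩
    · rw [sUnion_iUnion, ← h1, sUnion_eq_iUnion]
      exact iUnion_congr r1
    · intro G hG G' hG' hne
      obtain ⟨F, hG⟩ := mem_iUnion.1 hG
      obtain ⟨F', hG'⟩ := mem_iUnion.1 hG'
      by_cases hFF : F = F'
      · subst hFF
        exact r2 F hG hG' hne
      · exact (h2 F.2 F'.2 (fun h ↦ hFF (Subtype.ext h))).mono (hRF F G hG) (hRF F' G' hG')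
    · intro G hG
      obtain ⟨F, hG⟩ := mem_iUnion.1 hG
      exact r3 F G hG
    · intro G hG D hD hDl
      obtain ⟨F, hG⟩ := mem_iUnion.1 hG
      have hD' : ((M.restrict F).restrict G)✶.IsCircuit D := by
        rwa [Matroid.restrict_restrict_eq _ (hRF F G hG)]
      exact h4 F F.2 D (r4 F G hG D hD' hDl) (hDl.trans (Order.lt_succ lam))
    · intro D hD hDl
      obtain ⟨F, hF, hDF⟩ := h5 D hD (hDl.trans (Order.le_succ _))
      obtain ⟨D', hD'D, hD'⟩ := exists_restrict_cocircuit (hPE F hF) hDF hD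
      have hD'M := h4 F hF D' hD'
        (Order.lt_succ_iff.2 ((Cardinal.mk_le_mk_of_subset hD'D).trans hDl))
      have heq : D' = D := hD'M.eq_of_subset_isCircuit hD hD'D
      subst heq
      obtain ⟨G, hG, hDG⟩ := r5 ⟨F, hF⟩ D' hD' hDl
      exact ⟨G, mem_iUnion.2 ⟨_, hG⟩, hDG⟩

end Lav

/-- Laviolette's theorem for finitary matroids: for every infinite cardinal `lam`, every
finitary matroid admits a `lam`-cocircuit faithful partition: a partition `P` of the
ground set such that every part has cardinality at most `lam`, every cocircuit of the
restriction to a part that has cardinality less than `lam` is a cocircuit of `M`, and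
every cocircuit of `M` of cardinality at most `lam` is contained in some part. -/
theorem laviolette (lam : Cardinal.{u}) (hlam : Cardinal.aleph0 ≤ lam)
    (M : Matroid α) [M.Finitary] :
    ∃ P : Set (Set α),
      ⋃₀ P = M.E ∧ P.Pairwise Disjoint ∧
      (∀ F ∈ P, Cardinal.mk F ≤ lam) ∧
      (∀ F ∈ P, ∀ D : Set α, (M.restrict F)✶.IsMinDepCircuit D → Cardinal.mk D < lam →
        M✶.IsMinDepCircuit D) ∧
      (∀ D : Set α, M✶.IsMinDepCircuit D → Cardinal.mk D ≤ lam → ∃ F ∈ P, D ⊆ F) := by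
  exact Lav.main lam hlam _ M rfl
end

section
/- (Farkas lemma for finitary binary oriented matroids.) Let (M, O, O*) be a finitary binary oriented matroid with ground set E. Then for every e ∈ E, exactly one of the following holds: there is a positive signed circuit C ∈ O with e ∈ dom(C), or there is a positive signed cocircuit D ∈ O* with e ∈ dom(D). In particular there is at least one of the two, and never both. -/
open Set Function

variable {α : Type*}

/-- A circuit of a matroid `M`: a minimal dependent set. A cocircuit of `M` is a
circuit of the dual matroid `M✶`. -/
def Matroid.IsCircuitSet (M : Matroid α) (C : Set α) : Prop := Minimal M.Dep C

/-- A signed set, encoded as an integer-valued function taking values `1` or `-1` on its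
support (which plays the role of the domain of the signed set) and `0` elsewhere. -/
def IsSignedSet (g : α → ℤ) : Prop := ∀ e ∈ Function.support g, g e = 1 ∨ g e = -1

/-- A signed set is positive if it is constantly `+1` on its domain. -/
def IsPositive (g : α → ℤ) : Prop := ∀ e ∈ Function.support g, g e = 1

/-- `O` is a signature of the set-system `𝒞`: it consists of exactly two signings of each
member of `𝒞`, these two being negatives of each other, and nothing else. -/
structure IsSignature (𝒞 : Set (Set α)) (O : Set (α → ℤ)) : Prop where
  signed : ∀ g ∈ O, IsSignedSet g
  dom_mem : ∀ g ∈ O, Function.support g ∈ 𝒞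
  exists_signing : ∀ C ∈ 𝒞, ∃ g ∈ O, Function.support g = C
  neg_mem : ∀ g ∈ O, -g ∈ O
  eq_or_eq_neg : ∀ g ∈ O, ∀ h ∈ O, Function.support g = Function.support h → h = g ∨ h = -g

/-- `(M, O, Ostar)` is an oriented matroid: `O` is a signature of the circuits of `M`,
`Ostar` is a signature of the cocircuits of `M`, and orthogonality holds: whenever the
domains of `C ∈ O` and `D ∈ Ostar` intersect, the restriction of `C` to the (finite)
intersection is neither equal to, nor the negative of, the restriction of `D`. -/
structure IsOrientation (M : Matroid α) (O Ostar : Set (α → ℤ)) : Prop where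
  circuit_signature : IsSignature {C | M.IsCircuitSet C} O
  cocircuit_signature : IsSignature {D | M✶.IsCircuitSet D} Ostar
  orthogonality : ∀ C ∈ O, ∀ D ∈ Ostar,
    (Function.support C ∩ Function.support D).Nonempty →
      (¬ ∀ e ∈ Function.support C ∩ Function.support D, C e = D e) ∧
      (¬ ∀ e ∈ Function.support C ∩ Function.support D, C e = - D e)

/-- The oriented matroid is binary: `∑_{e ∈ dom C ∩ dom D} C(e)·D(e) = 0` for every
signed circuit `C ∈ O` and signed cocircuit `D ∈ Ostar` (a finite sum, since circuits
of a finitary matroid are finite). -/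
def IsBinaryOrientation (O Ostar : Set (α → ℤ)) : Prop :=
  ∀ C ∈ O, ∀ D ∈ Ostar, ∑ᶠ e, C e * D e = 0

/-- The oriented matroid is balanced: in every signed cocircuit, the set of positive
elements and the set of negative elements have the same cardinality. -/
def IsBalanced (Ostar : Set (α → ℤ)) : Prop :=
  ∀ D ∈ Ostar, Cardinal.mk {e : α | D e = 1} = Cardinal.mk {e : α | D e = -1}

/-- A member of a signature takes only the values `0`, `1`, `-1`. -/
lemma IsSignature.trichotomy {𝒞 : Set (Set α)} {O : Set (α → ℤ)} (h : IsSignature 𝒞 O)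
    {g : α → ℤ} (hg : g ∈ O) (x : α) : g x = 0 ∨ g x = 1 ∨ g x = -1 := by
  by_cases hx : g x = 0
  · exact Or.inl hx
  · exact Or.inr (h.signed g hg x hx)

/-- Each member of the set system has a signing that is `+1` at a given element. -/
lemma IsSignature.exists_pos {𝒞 : Set (Set α)} {O : Set (α → ℤ)} (h : IsSignature 𝒞 O)
    {C : Set α} (hC : C ∈ 𝒞) {e : α} (he : e ∈ C) :
    ∃ g ∈ O, g e = 1 ∧ ∀ x, x ∉ C → g x = 0 := by
  obtain ⟨g, hg, rfl⟩ := h.exists_signing C hC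
  have h0 : ∀ x, x ∉ support g → g x = 0 := fun x hx => by simpa using hx
  rcases h.signed g hg e he with h1 | h1
  · exact ⟨g, hg, h1, h0⟩
  · exact ⟨-g, h.neg_mem g hg, by simp [h1], fun x hx => by simp [h0 x hx]⟩

/-- If `e` is not spanned by `G`, some cocircuit contains `e` and avoids `G`. -/
lemma exists_cocircuit_avoiding (M : Matroid α) {e : α} (he : e ∈ M.E) {G : Set α}
    (hG : e ∉ M.closure G) : ∃ K, M✶.IsCircuitSet K ∧ e ∈ K ∧ Disjoint K G := by
  obtain ⟨I, hI⟩ := M.exists_isBasis' G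
  have heI : e ∉ M.closure I := by rwa [hI.closure_eq_closure]
  have hins : M.Indep (insert e I) :=
    (hI.indep.insert_indep_iff).2 (Or.inl ⟨he, heI⟩)
  obtain ⟨B, hB, hIB⟩ := hins.exists_isBase_superset
  have heB : e ∈ B := hIB (mem_insert _ _)
  have heI' : e ∉ I := fun h => heI (M.mem_closure_of_mem h hI.indep.subset_ground)
  refine ⟨M.E \ M.closure (B \ {e}), hB.compl_closure_sdiff_singleton_isCocircuit heB,
    ⟨he, hB.indep.notMem_closure_sdiff_of_mem heB⟩, ?_⟩
  rw [Set.disjoint_left]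
  rintro x ⟨hxE, hx⟩ hxG
  apply hx
  have h1 : x ∈ M.closure G := M.mem_closure_of_mem' hxG hxE
  rw [← hI.closure_eq_closure] at h1
  refine M.closure_subset_closure ?_ h1
  intro y hy
  exact ⟨hIB (mem_insert_of_mem _ hy), fun h => heI' (by rw [mem_singleton_iff] at h; rwa [← h])⟩

/-- The Minty colouring lemma, with finitely many sign-constrained elements `B`. -/
lemma minty (M : Matroid α) (O Ostar : Set (α → ℤ)) (hor : IsOrientation M O Ostar)
    {e : α} (he : e ∈ M.E) {B : Set α} (hB : B.Finite) :
    ∀ G : Set α, e ∉ G → e ∉ B → Disjoint B G →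
      (∃ C ∈ O, C e = 1 ∧ (∀ x ∈ B, 0 ≤ C x) ∧ ∀ x, x ≠ e → x ∉ B → x ∉ G → C x = 0) ∨
      (∃ D ∈ Ostar, D e = 1 ∧ (∀ x ∈ B, 0 ≤ D x) ∧ ∀ x ∈ G, D x = 0) := by
  induction B, hB using Set.Finite.induction_on with
  | empty =>
    intro G heG _ _
    by_cases hcl : e ∈ M.closure G
    · left
      obtain ⟨C, hCG, hC, heC⟩ := (M.mem_closure_iff_exists_isCircuit heG).1 hcl
      obtain ⟨g, hg, hge, hg0⟩ := hor.circuit_signature.exists_pos (C := C) hC heC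
      refine ⟨g, hg, hge, by simp, fun x hxe _ hxG => hg0 x fun hx => ?_⟩
      rcases hCG hx with h | h
      · exact hxe h
      · exact hxG h
    · right
      obtain ⟨K, hK, heK, hKG⟩ := exists_cocircuit_avoiding M he hcl
      obtain ⟨g, hg, hge, hg0⟩ := hor.cocircuit_signature.exists_pos (C := K) hK heK
      exact ⟨g, hg, hge, by simp, fun x hx => hg0 x fun hxK => Set.disjoint_left.1 hKG hxK hx⟩
  | @insert b B hbB _ ih =>
    intro G heG heB hdisj
    have hbe : b ≠ e := fun h => heB (by simp [h])
    have heB' : e ∉ B := fun h => heB (mem_insert_of_mem _ h)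
    have hbG : b ∉ G := fun h => Set.disjoint_left.1 hdisj (mem_insert _ _) h
    have hBG : Disjoint B G := hdisj.mono_left (subset_insert _ _)
    have h1 := ih (insert b G) (by simp [heG, hbe.symm]) heB'
      (by rw [Set.disjoint_insert_right]; exact ⟨hbB, hBG⟩)
    have h2 := ih G heG heB' hBG
    rcases h1 with ⟨C, hC, hCe, hCB, hC0⟩ | ⟨D, hD, hDe, hDB, hD0⟩
    swap
    · right
      refine ⟨D, hD, hDe, ?_, fun x hx => hD0 x (mem_insert_of_mem _ hx)⟩
      rintro x (rfl | hx)
      · exact (hD0 x (mem_insert _ _)).ge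
      · exact hDB x hx
    rcases h2 with ⟨C', hC', hCe', hCB', hC0'⟩ | ⟨D, hD, hDe, hDB, hD0⟩
    · left
      refine ⟨C', hC', hCe', ?_, fun x hx hxB hxG =>
        hC0' x hx (fun h => hxB (mem_insert_of_mem _ h)) hxG⟩
      rintro x (rfl | hx)
      · exact (hC0' x hbe hbB hbG).ge
      · exact hCB' x hx
    by_cases hCb : 0 ≤ C b
    · left
      refine ⟨C, hC, hCe, ?_, fun x hx hxB hxG => hC0 x hx
        (fun h => hxB (mem_insert_of_mem _ h)) ?_⟩
      · rintro x (rfl | hx)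
        · exact hCb
        · exact hCB x hx
      · rintro (rfl | h)
        · exact hxB (mem_insert _ _)
        · exact hxG h
    by_cases hDb : 0 ≤ D b
    · right
      refine ⟨D, hD, hDe, ?_, hD0⟩
      rintro x (rfl | hx)
      · exact hDb
      · exact hDB x hx
    exfalso
    refine (hor.orthogonality C hC D hD ⟨e, by simp [hCe], by simp [hDe]⟩).1 ?_
    rintro x ⟨hxC, hxD⟩
    rw [Function.mem_support] at hxC hxD
    have tC := hor.circuit_signature.trichotomy hC
    have tD := hor.cocircuit_signature.trichotomy hD
    by_cases hxe : x = e
    · rw [hxe, hCe, hDe]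
    by_cases hxb : x = b
    · subst hxb
      have := tC x
      have := tD x
      omega
    by_cases hxB : x ∈ B
    · have := tC x
      have := tD x
      have := hCB x hxB
      have := hDB x hxB
      omega
    by_cases hxG : x ∈ G
    · exact absurd (hD0 x hxG) hxD
    · exact absurd (hC0 x hxe hxB (by simp [hxb, hxG])) hxC

/-- In a chain of sets, finitely many elements each avoided by some member are avoided by a
common member. -/
lemma chain_avoid {c : Set (Set α)} (hc : IsChain (· ⊆ ·) c) (hne : c.Nonempty) {T : Set α}
    (hT : T.Finite) : (∀ x ∈ T, ∃ s ∈ c, x ∉ s) → ∃ s ∈ c, ∀ x ∈ T, x ∉ s := by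
  induction T, hT using Set.Finite.induction_on with
  | empty =>
    intro _
    obtain ⟨s, hs⟩ := hne
    exact ⟨s, hs, by simp⟩
  | @insert a T _ _ ih =>
    intro h
    obtain ⟨s, hs, hsT⟩ := ih fun x hx => h x (mem_insert_of_mem _ hx)
    obtain ⟨t, ht, hat⟩ := h a (mem_insert _ _)
    rcases hc.total hs ht with hst | hts
    · refine ⟨s, hs, ?_⟩
      rintro x (rfl | hx)
      · exact fun h => hat (hst h)
      · exact hsT x hx
    · refine ⟨t, ht, ?_⟩
      rintro x (rfl | hx)
      · exact hat
      · exact fun h => hsT x hx (hts h)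

/-- Consequence of a vanishing product sum with a single possibly negative term. -/
lemma sum_key {C D : α → ℤ} (hfin : (support C).Finite) (hsum : ∑ᶠ x, C x * D x = 0)
    {e b : α} (hbe : b ≠ e) (hCe : C e = 1) (hDe : D e = 1) (hCb : C b = -1) (hDb : D b ≤ 1)
    (hnn : ∀ x, x ≠ b → 0 ≤ C x * D x) :
    D b = 1 ∧ ∀ x, x ≠ e → x ≠ b → C x * D x = 0 := by
  classical
  have hs : support (fun x => C x * D x) ⊆ (hfin.toFinset : Set α) := by
    intro x hx
    simp only [Function.mem_support] at hx
    simpa using left_ne_zero_of_mul hx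
  rw [finsum_eq_sum_of_support_subset _ hs] at hsum
  have hb : b ∈ hfin.toFinset := by simp [hCb]
  have he : e ∈ hfin.toFinset.erase b := by simp [hCe, hbe.symm]
  rw [← Finset.add_sum_erase _ _ hb, ← Finset.add_sum_erase _ _ he, hCe, hDe, hCb] at hsum
  have hnn' : ∀ x ∈ (hfin.toFinset.erase b).erase e, 0 ≤ C x * D x := by
    intro x hx
    simp only [Finset.mem_erase] at hx
    exact hnn x hx.2.1
  have h0 := Finset.sum_nonneg hnn'
  refine ⟨by linarith, fun x hxe hxb => ?_⟩
  have hz : ∑ x ∈ (hfin.toFinset.erase b).erase e, C x * D x = 0 := by linarith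
  by_cases hx : C x = 0
  · simp [hx]
  · exact (Finset.sum_eq_zero_iff_of_nonneg hnn').1 hz x (by simp [hxe, hxb, hx])

/-- Farkas lemma for finitary binary oriented matroids: through every ground-set
element there is either a positive signed circuit or a positive signed cocircuit,
but not both. -/
theorem farkas_binary (M : Matroid α) [M.Finitary] (O Ostar : Set (α → ℤ))
    (hor : IsOrientation M O Ostar) (hbin : IsBinaryOrientation O Ostar) :
    ∀ e ∈ M.E, Xor' (∃ C ∈ O, IsPositive C ∧ e ∈ Function.support C)
      (∃ D ∈ Ostar, IsPositive D ∧ e ∈ Function.support D) := by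
  intro e he
  have tO := fun {C} (hC : C ∈ O) => hor.circuit_signature.trichotomy hC
  have tD := fun {D} (hD : D ∈ Ostar) => hor.cocircuit_signature.trichotomy hD
  have hfin : ∀ C ∈ O, (support C).Finite := fun C hC =>
    Matroid.IsCircuit.finite (M := M) (hor.circuit_signature.dom_mem C hC)
  have hnot : ¬ ((∃ C ∈ O, IsPositive C ∧ e ∈ Function.support C) ∧
      (∃ D ∈ Ostar, IsPositive D ∧ e ∈ Function.support D)) := by
    rintro ⟨⟨C, hC, hCp, heC⟩, ⟨D, hD, hDp, heD⟩⟩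
    exact (hor.orthogonality C hC D hD ⟨e, heC, heD⟩).1 fun x hx => by
      rw [hCp x hx.1, hDp x hx.2]
  suffices hor' : ¬ (∃ C ∈ O, IsPositive C ∧ e ∈ Function.support C) →
      (∃ D ∈ Ostar, IsPositive D ∧ e ∈ Function.support D) by
    by_cases h : ∃ C ∈ O, IsPositive C ∧ e ∈ Function.support C
    · exact Or.inl ⟨h, fun h' => hnot ⟨h, h'⟩⟩
    · exact Or.inr ⟨hor' h, h⟩
  intro hno
  -- sets `S` meeting negatively every signed circuit that is positive at `e`
  let Z : Set (Set α) := {S | e ∈ S ∧ ∀ C ∈ O, C e = 1 → ∃ x ∈ S, C x < 0}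
  have huniv : (univ : Set α) ∈ Z := by
    refine ⟨mem_univ _, fun C hC hCe => ?_⟩
    by_contra hcon
    push Not at hcon
    refine hno ⟨C, hC, fun x hx => ?_, by simp [hCe]⟩
    have := tO hC x
    have := hcon x (mem_univ _)
    rw [Function.mem_support] at hx
    omega
  obtain ⟨S, -, hSmin⟩ := zorn_superset_nonempty Z (by
    intro c hcZ hc hne
    refine ⟨⋂₀ c, ⟨fun s hs => (hcZ hs).1, fun C hC hCe => ?_⟩, fun s hs => sInter_subset_of_mem hs⟩
    by_contra hcon
    push Not at hcon
    have hTf : {x | C x < 0}.Finite := (hfin C hC).subset fun x hx => by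
      simp only [mem_ofPred_eq] at hx
      simp [hx.ne]
    obtain ⟨s, hs, hsT⟩ := chain_avoid hc hne hTf (by
      intro x hx
      by_contra hcon2
      push Not at hcon2
      have h1 := hcon x hcon2
      simp only [mem_ofPred_eq] at hx
      omega)
    obtain ⟨x, hxs, hx⟩ := (hcZ hs).2 C hC hCe
    exact hsT x hx hxs) univ huniv
  obtain ⟨heS, hS⟩ := hSmin.prop
  -- for finite `B` there are cocircuits inside `S`, nonnegative on `B`
  have hcoc : ∀ B : Set α, B.Finite → B ⊆ S \ {e} →
      ∃ D ∈ Ostar, D e = 1 ∧ (∀ x ∈ B, 0 ≤ D x) ∧ ∀ x, x ∉ S → D x = 0 := by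
    intro B hB hBS
    rcases minty M O Ostar hor he hB Sᶜ (by simpa using heS) (fun h => (hBS h).2 rfl)
      (Set.disjoint_left.2 fun x hx hx' => hx' (hBS hx).1) with ⟨C, hC, hCe, hCB, hC0⟩ | h
    · exfalso
      obtain ⟨x, hxS, hx⟩ := hS C hC hCe
      have hxe : x ≠ e := by rintro rfl; omega
      by_cases hxB : x ∈ B
      · have := hCB x hxB
        omega
      · have := hC0 x hxe hxB (by simpa using hxS)
        omega
    · exact h
  -- circuits witnessing minimality
  have hcirc : ∀ b, b ∈ S → b ≠ e →
      ∃ C ∈ O, C e = 1 ∧ C b = -1 ∧ ∀ x ∈ S, x ≠ b → 0 ≤ C x := by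
    intro b hb hbe
    have hnZ : S \ {b} ∉ Z := fun h => (hSmin.le_of_le h sdiff_subset hb).2 rfl
    have : ∃ C ∈ O, C e = 1 ∧ ∀ x ∈ S \ {b}, 0 ≤ C x := by
      by_contra hcon
      push Not at hcon
      exact hnZ ⟨⟨heS, fun h => hbe h.symm⟩, hcon⟩
    obtain ⟨C, hC, hCe, hCS⟩ := this
    refine ⟨C, hC, hCe, ?_, fun x hx hxb => hCS x ⟨hx, hxb⟩⟩
    obtain ⟨x, hxS, hx⟩ := hS C hC hCe
    have hxb : x = b := by
      by_contra hxb
      have := hCS x ⟨hxS, hxb⟩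
      omega
    subst hxb
    have := tO hC x
    omega
  have key : ∀ b, b ≠ e → ∀ C ∈ O, C e = 1 → C b = -1 → (∀ x ∈ S, x ≠ b → 0 ≤ C x) →
      ∀ D ∈ Ostar, D e = 1 → (∀ x ∈ (support C ∩ S) \ {e}, 0 ≤ D x) → (∀ x, x ∉ S → D x = 0) →
      D b = 1 ∧ ∀ x, x ≠ e → x ≠ b → C x * D x = 0 := by
    intro b hbe C hC hCe hCb hCS D hD hDe hDC hD0
    refine sum_key (hfin C hC) (hbin C hC D hD) hbe hCe hDe hCb
      (by have := tD hD b; omega) fun x hxb => ?_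
    by_cases hxe : x = e
    · simp [hxe, hCe, hDe]
    by_cases hxS : x ∈ S
    · by_cases hxC : C x = 0
      · simp [hxC]
      · exact mul_nonneg (hCS x hxS hxb) (hDC x ⟨⟨hxC, hxS⟩, hxe⟩)
    · simp [hD0 x hxS]
  obtain ⟨D, hD, hDe, -, hD0⟩ := hcoc ∅ finite_empty (empty_subset _)
  refine ⟨D, hD, fun b hb => ?_, by simp [hDe]⟩
  by_cases hbe : b = e
  · rw [hbe, hDe]
  have hbS : b ∈ S := by
    by_contra h
    exact hb (hD0 b h)
  by_contra hDb
  have hDb' : D b = -1 := (hor.cocircuit_signature.signed D hD b hb).resolve_left hDb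
  obtain ⟨C, hC, hCe, hCb, hCS⟩ := hcirc b hbS hbe
  refine (hor.orthogonality C hC D hD ⟨e, by simp [hCe], by simp [hDe]⟩).1 ?_
  rintro x ⟨hxC, hxD⟩
  by_cases hxe : x = e
  · rw [hxe, hCe, hDe]
  by_cases hxb : x = b
  · rw [hxb, hCb, hDb']
  exfalso
  have hxS : x ∈ S := by
    by_contra h
    exact hxD (hD0 x h)
  obtain ⟨C', hC', hCe', hCx', hCS'⟩ := hcirc x hxS hxe
  obtain ⟨D', hD', hDe', hDB', hD0'⟩ := hcoc (((support C ∪ support C') ∩ S) \ {e})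
    ((((hfin C hC).union (hfin C' hC')).subset inter_subset_left).subset sdiff_subset)
    (fun y hy => ⟨hy.1.2, hy.2⟩)
  have k1 := key b hbe C hC hCe hCb hCS D' hD' hDe'
    (fun y hy => hDB' y ⟨⟨Or.inl hy.1.1, hy.1.2⟩, hy.2⟩) hD0'
  have k2 := key x hxe C' hC' hCe' hCx' hCS' D' hD' hDe'
    (fun y hy => hDB' y ⟨⟨Or.inr hy.1.1, hy.1.2⟩, hy.2⟩) hD0'
  have k3 := k1.2 x hxe hxb
  rw [k2.1, mul_one] at k3
  exact hxC k3
end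

section
/- Let (M, O, O*) be a finitary binary oriented matroid with ground set E, let e₀ ∈ E, and let f : E → ℕ be a function with f(e₀) ≥ 1 such that Σ_{e ∈ dom(C)} f(e)·C(e) = 0 for every C ∈ O. Then there exists a set G ⊆ {e ∈ E : f(e) ≠ 0} with e₀ ∈ G such that Σ_{e ∈ G ∩ dom(C)} C(e) = 0 for every C ∈ O. -/
open Set Function

variable {α : Type*}

theorem finite_stage (M : Matroid α) (O Ostar : Set (α → ℤ))
    (hor : IsOrientation M O Ostar) (hbin : IsBinaryOrientation O Ostar)
    (e₀ : α) (he₀ : e₀ ∈ M.E) (F : Finset α) (heF : e₀ ∈ F) (n : ℕ) :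
    ∀ g : α → ℤ, (∀ e, 0 ≤ g e) → 0 < g e₀ →
      (∀ C ∈ O, support C ⊆ F → ∑ e ∈ F, g e * C e = 0) →
      (F.filter (fun e => g e ≠ 0)).card = n →
      ∃ D : α → ℤ, (∀ e ∈ F, D e = 0 ∨ D e = 1) ∧ D e₀ = 1 ∧
        (∀ e ∈ F, D e ≠ 0 → e ∈ M.E ∧ g e ≠ 0) ∧
        ∀ C ∈ O, support C ⊆ F → ∑ e ∈ F, D e * C e = 0 := by
  induction n using Nat.strong_induction_on with
  | _ n ih =>
  intro g hg0 hge hgC hn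
  set Z : Set α := {e | e ∈ F ∧ g e = 0} with hZ
  have heZ : e₀ ∉ Z := fun h => hge.ne' h.2
  -- `e₀` is not spanned by the zeros of `g`
  have hcl : e₀ ∉ M.closure Z := by
    intro h
    obtain ⟨C, hCs, hC, heC⟩ := Matroid.exists_isCircuit_of_mem_closure h heZ
    obtain ⟨c, hcO, rfl⟩ := hor.circuit_signature.exists_signing C hC
    have hsub : support c ⊆ F := fun x hx => by
      rcases hCs hx with rfl | h
      · exact heF
      · exact h.1
    have := hgC c hcO hsub
    rw [Finset.sum_eq_single_of_mem e₀ heF] at this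
    · rcases mul_eq_zero.1 this with h | h
      · exact hge.ne' h
      · exact heC h
    · intro b _ hb
      by_cases hcb : c b = 0
      · simp [hcb]
      · rcases hCs hcb with h | h
        · exact absurd h hb
        · simp [h.2]
  obtain ⟨K, hK, heK⟩ :=
    (Matroid.contract_isNonloop_iff.2 ⟨he₀, hcl⟩).exists_mem_isCocircuit
  rw [Matroid.contract_isCocircuit_iff] at hK
  obtain ⟨hK, hKZ⟩ := hK
  have hD : ∃ D ∈ Ostar, support D = K ∧ D e₀ = 1 := by
    obtain ⟨D, hDO, rfl⟩ := hor.cocircuit_signature.exists_signing K hK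
    rcases hor.cocircuit_signature.signed D hDO e₀ heK with h | h
    · exact ⟨D, hDO, rfl, h⟩
    · exact ⟨-D, hor.cocircuit_signature.neg_mem D hDO, by simp, by simp [h]⟩
  obtain ⟨D, hDO, rfl, hDe⟩ := hD
  have hDC : ∀ C ∈ O, support C ⊆ F → ∑ e ∈ F, D e * C e = 0 := by
    intro C hC hCF
    rw [← hbin C hC D hDO, finsum_eq_sum_of_support_subset (s := F)]
    · exact Finset.sum_congr rfl fun _ _ => mul_comm _ _
    · intro x hx
      exact hCF (left_ne_zero_of_mul hx)
  have hDg : ∀ e ∈ F, D e ≠ 0 → e ∈ M.E ∧ g e ≠ 0 := by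
    intro e he hDe'
    exact ⟨Matroid.IsCocircuit.subset_ground hK hDe',
      fun h => Set.disjoint_left.1 hKZ hDe' ⟨he, h⟩⟩
  have hDs : ∀ e, D e = 0 ∨ D e = 1 ∨ D e = -1 := by
    intro e
    by_cases h : D e = 0
    · exact Or.inl h
    · exact Or.inr (hor.cocircuit_signature.signed D hDO e h)
  by_cases hN : (F.filter (fun e => D e = -1)).Nonempty
  · obtain ⟨m, hm, hmin⟩ := Finset.exists_min_image _ g hN
    rw [Finset.mem_filter] at hm
    have hmg : g m ≠ 0 := (hDg m hm.1 (by simp [hm.2])).2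
    -- `g + (g m) D` on `F`, zero elsewhere
    classical
    let g' : α → ℤ := fun e => if e ∈ F then g e + g m * D e else 0
    have hgF : ∀ e ∈ F, g' e = g e + g m * D e := fun e he => by simp [g', he]
    have hg'g : ∀ e ∈ F, g' e ≠ 0 → g e ≠ 0 := by
      intro e he h hge0
      have : D e = 0 := by
        by_contra hne
        exact (hDg e he hne).2 hge0
      exact h (by rw [hgF e he, hge0, this]; simp)
    obtain ⟨D', h1, h2, h3, h4⟩ := ih (F.filter (fun e => g' e ≠ 0)).card (by
      rw [← hn]
      apply Finset.card_lt_card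
      refine (Finset.ssubset_iff_of_subset ?_).2 ⟨m, ?_, ?_⟩
      · intro e he
        rw [Finset.mem_filter] at he ⊢
        exact ⟨he.1, hg'g e he.1 he.2⟩
      · exact Finset.mem_filter.2 ⟨hm.1, hmg⟩
      · simp [hgF m hm.1, hm.2]) g' (by
      intro e
      by_cases he : e ∈ F
      · rw [hgF e he]
        have h1 := hg0 e
        have h2 := hg0 m
        rcases hDs e with h | h | h
        · simp [h, h1]
        · simp only [h, mul_one]; omega
        · have := hmin e (Finset.mem_filter.2 ⟨he, h⟩)
          rw [h]; omega
      · simp [g', he]) (by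
      have := hg0 m
      rw [hgF e₀ heF, hDe]; omega) (by
      intro C hC hCF
      calc ∑ e ∈ F, g' e * C e = ∑ e ∈ F, (g e * C e + g m * (D e * C e)) :=
            Finset.sum_congr rfl fun e he => by rw [hgF e he]; ring
        _ = 0 := by
            rw [Finset.sum_add_distrib, ← Finset.mul_sum, hgC C hC hCF, hDC C hC hCF]; simp) rfl
    exact ⟨D', h1, h2, fun e he h => ⟨(h3 e he h).1, hg'g e he (h3 e he h).2⟩, h4⟩
  · refine ⟨D, fun e he => ?_, hDe, hDg, hDC⟩
    rcases hDs e with h | h | h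
    · exact Or.inl h
    · exact Or.inr h
    · exact absurd ⟨e, Finset.mem_filter.2 ⟨he, h⟩⟩ hN

/-- If `f : E → ℕ` satisfies `f e₀ ≥ 1` and `∑_{e ∈ dom C} f(e)·C(e) = 0` for every
signed circuit `C ∈ O` of a finitary binary oriented matroid, then there is a set `G`
of elements with nonzero `f`-value, containing `e₀`, with `∑_{e ∈ G ∩ dom C} C(e) = 0`
for every `C ∈ O`. -/
theorem exists_zero_sum_subset_of_support (M : Matroid α) [M.Finitary]
    (O Ostar : Set (α → ℤ))
    (hor : IsOrientation M O Ostar) (hbin : IsBinaryOrientation O Ostar)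
    (e₀ : α) (he₀ : e₀ ∈ M.E) (f : α → ℕ) (hfe₀ : 1 ≤ f e₀)
    (hf : ∀ C ∈ O, ∑ᶠ e, (f e : ℤ) * C e = 0) :
    ∃ G ⊆ {e ∈ M.E | f e ≠ 0}, e₀ ∈ G ∧ ∀ C ∈ O, ∑ᶠ e ∈ G, C e = 0 := by
  classical
  have key : ∀ F : Finset α, ∃ D : α → ℤ, e₀ ∈ F → (∀ e ∈ F, D e = 0 ∨ D e = 1) ∧ D e₀ = 1 ∧
        (∀ e ∈ F, D e ≠ 0 → e ∈ M.E ∧ (f e : ℤ) ≠ 0) ∧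
        ∀ C ∈ O, support C ⊆ F → ∑ e ∈ F, D e * C e = 0 := by
    intro F
    by_cases heF : e₀ ∈ F
    · obtain ⟨D, hD⟩ := finite_stage M O Ostar hor hbin e₀ he₀ F heF _ (fun e => (f e : ℤ))
        (fun e => by positivity) (by exact_mod_cast hfe₀) (by
          intro C hC hCF
          rw [← hf C hC, finsum_eq_sum_of_support_subset (s := F)]
          intro x hx
          exact hCF (right_ne_zero_of_mul hx)) rfl
      exact ⟨D, fun _ => hD⟩
    · exact ⟨0, fun h => absurd h heF⟩
  choose D hD using key
  let U : Ultrafilter (Finset α) := Ultrafilter.of Filter.atTop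
  have hU : (U : Filter (Finset α)) ≤ Filter.atTop := Ultrafilter.of_le _
  have hsup : ∀ S : Finset α, ∀ᶠ F in (U : Filter (Finset α)), S ⊆ F := fun S =>
    hU (Filter.eventually_ge_atTop S)
  have he₀U : ∀ᶠ F in (U : Filter (Finset α)), e₀ ∈ F := by
    filter_upwards [hsup {e₀}] with F hF
    exact hF (by simp)
  refine ⟨{e | ∀ᶠ F in (U : Filter (Finset α)), D F e = 1}, ?_, ?_, ?_⟩
  · intro e he
    obtain ⟨F, h1, h2, h3⟩ := (he.and (he₀U.and (hsup {e}))).exists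
    have := (hD F h2).2.2.1 e (h3 (by simp)) (by simp [h1])
    exact ⟨this.1, by exact_mod_cast this.2⟩
  · filter_upwards [he₀U] with F hF
    exact (hD F hF).2.1
  · intro C hC
    have hfin : (support C).Finite :=
      Matroid.IsCircuit.finite (hor.circuit_signature.dom_mem C hC)
    have hev : ∀ᶠ F in (U : Filter (Finset α)), ∀ e ∈ hfin.toFinset,
        (D F e = 1 ↔ ∀ᶠ F in (U : Filter (Finset α)), D F e = 1) := by
      rw [Filter.eventually_all_finset]
      intro e _
      by_cases h : ∀ᶠ F in (U : Filter (Finset α)), D F e = 1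
      · filter_upwards [h] with F hF
        simp [hF, h]
      · filter_upwards [Ultrafilter.eventually_not.2 h] with F hF
        simp [hF, h]
    obtain ⟨F, h1, h2, h3⟩ := (hev.and (he₀U.and (hsup hfin.toFinset))).exists
    have hCF : support C ⊆ F := fun x hx => h3 (by simpa using hx)
    rw [← (hD F h2).2.2.2 C hC hCF, finsum_mem_def, finsum_eq_sum_of_support_subset (s := F)]
    · refine Finset.sum_congr rfl fun e he => ?_
      by_cases hCe : C e = 0
      · simp [Set.indicator, hCe]
      · have := h1 e (by simpa using hCe)
        rcases (hD F h2).1 e he with h | h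
        · rw [Set.indicator_of_notMem, h, zero_mul]
          intro hmem
          have := this.2 hmem
          omega
        · rw [Set.indicator_of_mem, h, one_mul]
          exact this.1 h
    · intro x hx
      exact hCF (fun h => hx (by simp [Set.indicator, h]))
end

section
/- A finitary binary oriented matroid can be partitioned into directed circuits if and only if it is balanced. That is, for a finitary binary oriented matroid (M, O, O*) with ground set E, the following are equivalent: (a) there is a set 𝒜 of positive signed circuits in O whose domains are pairwise disjoint and whose domains have union E; (b) for every D ∈ O*, the sets D⁺ = {e ∈ dom(D) : D(e) = +1} and D⁻ = {e ∈ dom(D) : D(e) = −1} have the same cardinality. -/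
open Set Function

variable {α : Type*}

namespace DirCirc

open Matroid

/-- Binary orientation data, with the circuit signings living in a fixed ambient set `O`. -/
structure BinO (M : Matroid α) (O : Set (α → ℤ)) : Prop where
  signed : ∀ g ∈ O, IsSignedSet g
  neg : ∀ g ∈ O, -g ∈ O
  ex : ∀ C, M.IsCircuit C → ∃ g ∈ O, support g = C
  co : ∀ K, M.IsCocircuit K → ∃ D : α → ℤ, IsSignedSet D ∧ support D = K ∧
    ∀ g ∈ O, M.IsCircuit (support g) → ∑ᶠ e, g e * D e = 0

/-- Signed cocircuits. -/
def Coc (M : Matroid α) (O : Set (α → ℤ)) (D : α → ℤ) : Prop :=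
  IsSignedSet D ∧ M.IsCocircuit (support D) ∧
    ∀ g ∈ O, M.IsCircuit (support g) → ∑ᶠ e, g e * D e = 0

/-- All signed cocircuits are balanced. -/
def Bal (M : Matroid α) (O : Set (α → ℤ)) : Prop :=
  ∀ D, Coc M O D → Cardinal.mk {e : α | D e = 1} = Cardinal.mk {e : α | D e = -1}

lemma signed_cases {g : α → ℤ} (hg : IsSignedSet g) (e : α) : g e = 0 ∨ g e = 1 ∨ g e = -1 := by
  by_cases h : g e = 0
  · exact Or.inl h
  · exact Or.inr (hg e h)

lemma signed_neg {g : α → ℤ} (hg : IsSignedSet g) : IsSignedSet (-g) := by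
  intro e he
  have := signed_cases hg e
  simp at he ⊢
  omega

lemma support_neg' (g : α → ℤ) : support (-g) = support g := by
  ext; simp

lemma coc_neg {M : Matroid α} {O : Set (α → ℤ)} {D : α → ℤ} (h : Coc M O D) : Coc M O (-D) := by
  refine ⟨signed_neg h.1, by rw [support_neg']; exact h.2.1, fun g hg hc => ?_⟩
  have := h.2.2 g hg hc
  simp only [Pi.neg_apply, mul_neg, finsum_neg_distrib, this, neg_zero]

lemma finsum_eq {g D : α → ℤ} (s : Finset α) (h : support g ∩ support D ⊆ s) :
    ∑ᶠ e, g e * D e = ∑ e ∈ s, g e * D e := by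
  apply finsum_eq_sum_of_support_subset
  intro e he
  apply h
  simp at he
  simpa using he

/-- A sum with one positive and otherwise nonnegative terms is nonzero. -/
lemma finsum_ne_zero {M : Matroid α} [M.Finitary] {O : Set (α → ℤ)} {D g : α → ℤ}
    (hD : Coc M O D) (hg : g ∈ O) (hc : M.IsCircuit (support g))
    (hnn : ∀ e, 0 ≤ g e * D e) (e : α) : g e * D e = 0 := by
  have h0 := hD.2.2 g hg hc
  rw [finsum_eq hc.finite.toFinset (by simp)] at h0
  rw [Finset.sum_eq_zero_iff_of_nonneg (fun e _ => hnn e)] at h0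
  by_cases he : g e = 0
  · simp [he]
  · exact h0 e (by simpa using he)

/-- isolating one term of the sum -/
lemma sum_split {M : Matroid α} [M.Finitary] {O : Set (α → ℤ)} {D g : α → ℤ}
    (hD : Coc M O D) (hg : g ∈ O) (hc : M.IsCircuit (support g)) (S : Finset α)
    (hnn : ∀ e ∉ S, 0 ≤ g e * D e) : ∑ e ∈ S, g e * D e ≤ 0 := by
  classical
  have h0 := hD.2.2 g hg hc
  rw [finsum_eq (hc.finite.toFinset ∪ S) (by intro x hx; simp at hx ⊢; left; exact hx.1)] at h0
  rw [← h0]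
  exact Finset.sum_le_sum_of_subset_of_nonneg Finset.subset_union_right (fun i _ h => hnn i h)

lemma sum_eq {M : Matroid α} [M.Finitary] {O : Set (α → ℤ)} {D g : α → ℤ}
    (hD : Coc M O D) (hg : g ∈ O) (hc : M.IsCircuit (support g)) (S : Finset α)
    (hS : ∀ e ∉ S, g e * D e = 0) : ∑ e ∈ S, g e * D e = 0 := by
  have h0 := hD.2.2 g hg hc
  rwa [finsum_eq S (by intro x hx; by_contra h; have := hS x h; simp at hx this; tauto)] at h0

/-- Minty's lemma with finitely many green elements. -/
lemma minty {M : Matroid α} [M.Finitary] {O : Set (α → ℤ)} (hO : BinO M O) {e : α} (he : e ∈ M.E)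
    (P : Finset α) (heP : e ∉ P) : ∀ (Y : Set α), Y ⊆ M.E → e ∉ Y → 
    (∃ g ∈ O, M.IsCircuit (support g) ∧ (support g ⊆ Y ∪ insert e ↑P) ∧ g e = 1 ∧
        ∀ x ∈ P, x ∉ Y → 0 ≤ g x) ∨
    (∃ D, Coc M O D ∧ D e = 1 ∧ (∀ x ∈ Y, D x = 0) ∧ ∀ x ∈ P, 0 ≤ D x) := by
  classical
  induction P using Finset.induction_on with
  | empty =>
    intro Y hY heY
    by_cases hcl : e ∈ M.closure Y
    · left
      obtain ⟨C, hC, hCc, heC⟩ := exists_isCircuit_of_mem_closure hcl heY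
      obtain ⟨g, hg, rfl⟩ := hO.ex C hCc
      have hsub : support g ⊆ Y ∪ insert e ↑(∅ : Finset α) := by
        refine hC.trans ?_
        simp
      rcases hO.signed g hg e heC with h | h
      · exact ⟨g, hg, hCc, hsub, h, by simp⟩
      · refine ⟨-g, hO.neg g hg, by rwa [support_neg'], by rwa [support_neg'], by simp [h], by simp⟩
    · right
      have hnl : (M ／ Y).IsNonloop e := contract_isNonloop_iff.2 ⟨he, hcl⟩
      obtain ⟨K, hK, heK⟩ := hnl.exists_mem_isCocircuit
      rw [contract_isCocircuit_iff] at hK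
      obtain ⟨D, hDs, rfl, hD⟩ := hO.co K hK.1
      have hv : ∀ x ∈ Y, D x = 0 := by
        intro x hx
        by_contra h
        exact disjoint_left.1 hK.2 h hx
      rcases hDs e heK with h | h
      · exact ⟨D, ⟨hDs, hK.1, hD⟩, h, hv, by simp⟩
      · exact ⟨-D, coc_neg ⟨hDs, hK.1, hD⟩, by simp [h], fun x hx => by simp [hv x hx], by simp⟩
  | insert f P hf ih =>
    intro Y hY heY
    have hef : e ≠ f := by rintro rfl; simp at heP
    have heP' : e ∉ P := by intro h; simp [h] at heP
    by_cases hfY : f ∈ Y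
    · rcases ih heP' Y hY heY with ⟨g, hg, hc, hs, h1, h2⟩ | ⟨D, hD, h1, h2, h3⟩
      · left
        refine ⟨g, hg, hc, hs.trans ?_, h1, ?_⟩
        · intro x; simp; tauto
        · intro x hx hxY
          rcases Finset.mem_insert.1 hx with rfl | hx
          · exact absurd hfY hxY
          · exact h2 x hx hxY
      · right
        refine ⟨D, hD, h1, h2, ?_⟩
        intro x hx
        rcases Finset.mem_insert.1 hx with rfl | hx
        · exact (h2 x hfY).ge
        · exact h3 x hx
    by_cases hfE : f ∈ M.E
    swap
    · rcases ih heP' Y hY heY with ⟨g, hg, hc, hs, h1, h2⟩ | ⟨D, hD, h1, h2, h3⟩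
      · left
        refine ⟨g, hg, hc, hs.trans ?_, h1, ?_⟩
        · intro x; simp; tauto
        · intro x hx hxY
          rcases Finset.mem_insert.1 hx with rfl | hx
          · by_contra hlt
            exact hfE (hc.subset_ground (by simp; omega))
          · exact h2 x hx hxY
      · right
        refine ⟨D, hD, h1, h2, ?_⟩
        intro x hx
        rcases Finset.mem_insert.1 hx with rfl | hx
        · by_contra hlt
          exact hfE (hD.2.1.subset_ground (by simp; omega))
        · exact h3 x hx
    rcases ih heP' (insert f Y) (insert_subset hfE hY) (by simp [hef, heY]) with
      ⟨g, hg, hc, hs, h1, h2⟩ | ⟨D, hD, h1, h2, h3⟩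
    swap
    · right
      refine ⟨D, hD, h1, fun x hx => h2 x (by simp [hx]), ?_⟩
      intro x hx
      rcases Finset.mem_insert.1 hx with rfl | hx
      · exact (h2 x (by simp)).ge
      · exact h3 x hx
    by_cases hgf : 0 ≤ g f
    · left
      refine ⟨g, hg, hc, hs.trans ?_, h1, ?_⟩
      · intro x; simp; tauto
      · intro x hx hxY
        rcases Finset.mem_insert.1 hx with rfl | hx
        · exact hgf
        · by_cases hxf : x = f
          · rw [hxf]; exact hgf
          · exact h2 x hx (by simp [hxf, hxY])
    rcases ih heP' Y hY heY with ⟨g', hg', hc', hs', h1', h2'⟩ | ⟨D, hD, h1', h2', h3'⟩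
    · left
      refine ⟨g', hg', hc', hs'.trans ?_, h1', ?_⟩
      · intro x; simp; tauto
      · intro x hx hxY
        rcases Finset.mem_insert.1 hx with rfl | hx
        · by_contra hlt
          have : x ∈ support g' := by simp; omega
          have := hs' this
          simp [hfY, hf, hef.symm] at this
        · exact h2' x hx hxY
    · right
      refine ⟨D, hD, h1', h2', ?_⟩
      intro x hx
      rcases Finset.mem_insert.1 hx with rfl | hx
      swap
      · exact h3' x hx
      by_contra hDx
      have hnn : ∀ y, 0 ≤ g y * D y := by
        intro y
        by_cases hyx : y = x
        · subst hyx; nlinarith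
        by_cases hyY : y ∈ Y
        · simp [h2' y hyY]
        by_cases hye : y = e
        · subst hye; simp [h1, h1']
        by_cases hyP : y ∈ P
        · exact mul_nonneg (h2 y hyP (by simp [hyx, hyY])) (h3' y hyP)
        · have : g y = 0 := by
            by_contra hne
            have := hs (show y ∈ support g from hne)
            simp [hyx, hyY, hye, hyP] at this
          simp [this]
      have := finsum_ne_zero hD hg hc hnn e
      simp [h1, h1'] at this

/-- In a finitary binary oriented matroid, each element is in a positive circuit or a positive
cocircuit. -/
lemma minty_infinite {M : Matroid α} [M.Finitary] {O : Set (α → ℤ)} (hO : BinO M O) {e : α}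
    (he : e ∈ M.E) :
    (∃ g ∈ O, M.IsCircuit (support g) ∧ g e = 1 ∧ ∀ x, 0 ≤ g x) ∨
    (∃ D, Coc M O D ∧ D e = 1 ∧ ∀ x, 0 ≤ D x) := by
  classical
  by_contra hcon
  push Not at hcon
  obtain ⟨hc1, hc2⟩ := hcon
  let S : Set (Set α) := {Y | Y ⊆ M.E ∧ e ∉ Y ∧ ∀ g ∈ O, M.IsCircuit (support g) → g e = 1 →
    ∃ x, x ∉ Y ∧ g x < 0}
  have hempty : ∅ ∈ S := ⟨by simp, by simp, fun g hg hc h1 => by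
    obtain ⟨x, hx⟩ := hc1 g hg hc h1
    exact ⟨x, by simp, hx⟩⟩
  obtain ⟨Y, -, hYm⟩ := zorn_subset_nonempty S (by
    intro c hcS hcc hcn
    refine ⟨⋃₀ c, ⟨sUnion_subset fun s hs => (hcS hs).1, ?_, ?_⟩, fun s hs => subset_sUnion_of_mem hs⟩
    · rintro ⟨s, hs, hes⟩
      exact (hcS hs).2.1 hes
    · intro g hg hc h1
      by_contra hno
      push Not at hno
      have hfin : ({x | g x < 0} : Set α).Finite := hc.finite.subset (by
        intro x hx; simp at hx ⊢; omega)
      have hsub : ({x | g x < 0} : Set α) ⊆ ⋃₀ c := by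
        intro x hx
        by_contra h
        exact absurd hx (by simpa using hno x h)
      obtain ⟨s, hs, hss⟩ := DirectedOn.exists_mem_subset_of_finite_of_subset_sUnion hcn hcc.directedOn hfin hsub
      obtain ⟨x, hx, hxg⟩ := (hcS hs).2.2 g hg hc h1
      exact hx (hss hxg)) ∅ hempty
  obtain ⟨hYE, heY, hY⟩ := hYm.prop
  -- circuits through `e` and `f`
  have key : ∀ f ∈ M.E, f ∉ Y → f ≠ e → ∃ g ∈ O, M.IsCircuit (support g) ∧ g e = 1 ∧ g f = -1 ∧
      ∀ x, x ∉ Y → x ≠ f → 0 ≤ g x := by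
    intro f hfE hfY hfe
    by_contra hno
    have : insert f Y ∈ S := by
      refine ⟨insert_subset hfE hYE, by simp [hfe.symm, heY], ?_⟩
      intro g hg hc h1
      by_contra hno'
      push Not at hno'
      have hnn : ∀ x, x ∉ Y → x ≠ f → 0 ≤ g x := fun x hx hxf => hno' x (by simp [hx, hxf])
      apply hno
      refine ⟨g, hg, hc, h1, ?_, hnn⟩
      obtain ⟨x, hxY, hx⟩ := hY g hg hc h1
      have hxf : x = f := by
        by_contra h
        have := hnn x hxY h
        omega
      subst hxf
      have := signed_cases (hO.signed g hg) x
      omega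
    exact hfY (hYm.le_of_ge this (subset_insert _ _) (mem_insert _ _))
  choose! C hCO hCc hCe hCf hCn using key
  have pair : ∀ f ∈ M.E, f ∉ Y → f ≠ e → ∀ h, h ∉ Y → h ≠ e → h ≠ f → C f h = 0 := by
    intro f hfE hfY hfe h hhY hhe hhf
    by_contra hne
    have hhE : h ∈ M.E := (hCc f hfE hfY hfe).subset_ground hne
    have hfin : (support (C f) ∪ support (C h)).Finite :=
      (hCc f hfE hfY hfe).finite.union (hCc h hhE hhY hhe).finite
    rcases minty hO he (hfin.toFinset.erase e) (by simp) Y hYE heY with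
      ⟨g, hg, hc, hs, h1, h2⟩ | ⟨D, hD, h1, h2, h3⟩
    · obtain ⟨x, hxY, hx⟩ := hY g hg hc h1
      have hxs := hs (show x ∈ support g by simp; omega)
      rcases hxs with hxs | hxs
      · exact hxY hxs
      rcases hxs with rfl | hxs
      · omega
      · have := h2 x hxs hxY
        omega
    · have hD0 : ∀ x, x ∈ support (C f) ∪ support (C h) → 0 ≤ D x := by
        intro x hx
        by_cases hxe : x = e
        · subst hxe; omega
        · exact h3 x (by simp only [Finset.mem_erase]; exact ⟨hxe, by simpa using hx⟩)
      have hfh : C f h = 1 := by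
        have := hCn f hfE hfY hfe h hhY hhf
        have := signed_cases (hO.signed _ (hCO f hfE hfY hfe)) h
        have : C f h ≠ 0 := hne
        omega
      have e1 := sum_split hD (hCO f hfE hfY hfe) (hCc f hfE hfY hfe) {e, f, h} (by
        intro x hx
        simp at hx
        by_cases hxY : x ∈ Y
        · simp [h2 x hxY]
        by_cases hx0 : C f x = 0
        · simp [hx0]
        exact mul_nonneg (hCn f hfE hfY hfe x hxY hx.2.1) (hD0 x (Or.inl hx0)))
      have e2 := sum_split hD (hCO h hhE hhY hhe) (hCc h hhE hhY hhe) {e, h} (by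
        intro x hx
        simp at hx
        by_cases hxY : x ∈ Y
        · simp [h2 x hxY]
        by_cases hx0 : C h x = 0
        · simp [hx0]
        exact mul_nonneg (hCn h hhE hhY hhe x hxY hx.2) (hD0 x (Or.inr hx0)))
      rw [Finset.sum_insert (by simp [hfe.symm, hhe.symm]), Finset.sum_insert (by simp [hhf.symm]),
        Finset.sum_singleton, hCe f hfE hfY hfe, hCf f hfE hfY hfe, hfh, h1] at e1
      rw [Finset.sum_insert (by simp [hhe.symm]), Finset.sum_singleton, hCe h hhE hhY hhe,
        hCf h hhE hhY hhe, h1] at e2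
      have := signed_cases hD.1 h
      have := signed_cases hD.1 f
      omega
  rcases minty hO he ∅ (by simp) Y hYE heY with
      ⟨g, hg, hc, hs, h1, h2⟩ | ⟨D, hD, h1, h2, h3⟩
  · obtain ⟨x, hxY, hx⟩ := hY g hg hc h1
    have hxs := hs (show x ∈ support g by simp; omega)
    simp [hxY] at hxs
    subst hxs
    omega
  · obtain ⟨x, hx⟩ := hc2 D hD h1
    have hxE : x ∈ M.E := hD.2.1.subset_ground (by simp; omega)
    have hxY : x ∉ Y := by
      intro h
      have := h2 x h
      omega
    have hxe : x ≠ e := by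
      rintro rfl
      omega
    have e1 := sum_eq hD (hCO x hxE hxY hxe) (hCc x hxE hxY hxe) {e, x} (by
      intro y hy
      simp at hy
      by_cases hyY : y ∈ Y
      · simp [h2 y hyY]
      · simp [pair x hxE hxY hxe y hyY hy.1 hy.2])
    rw [Finset.sum_insert (by simp [hxe.symm]), Finset.sum_singleton, hCe x hxE hxY hxe,
      hCf x hxE hxY hxe, h1] at e1
    omega

/-- A balanced matroid has a positive circuit through each element. -/
lemma exists_pos_circuit {M : Matroid α} [M.Finitary] {O : Set (α → ℤ)} (hO : BinO M O)
    (hB : Bal M O) {e : α} (he : e ∈ M.E) :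
    ∃ g ∈ O, M.IsCircuit (support g) ∧ g e = 1 ∧ IsPositive g := by
  rcases minty_infinite hO he with ⟨g, hg, hc, h1, h2⟩ | ⟨D, hD, h1, h2⟩
  · refine ⟨g, hg, hc, h1, fun x hx => ?_⟩
    have := h2 x
    rcases hO.signed g hg x hx with h | h
    · exact h
    · omega
  · have := hB D hD
    have h0 : ({x | D x = -1} : Set α) = ∅ := by
      ext x
      have := h2 x
      simp; omega
    rw [h0, Cardinal.mk_emptyCollection, Cardinal.mk_eq_zero_iff] at this
    exact (this.false ⟨e, h1⟩).elim

end DirCirc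

namespace DirCirc

open Matroid Cardinal

lemma circuit_coindep {M : Matroid α} {I : Set α} (hI : M✶.Indep I) {e : α} (he : e ∈ I) :
    ∃ C, M.IsCircuit C ∧ C ∩ I = {e} := by
  obtain ⟨K, hK, h⟩ := hI.exists_isCocircuit_inter_eq_mem he
  refine ⟨K, ?_, h⟩
  rw [isCocircuit_def, dual_dual] at hK
  exact hK

lemma uniq {M : Matroid α} [M.Finitary] {O : Set (α → ℤ)} (hO : BinO M O) {D D' : α → ℤ}
    (hD : Coc M O D) (hD' : Coc M O D') (hs : support D = support D') : D' = D ∨ D' = -D := by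
  classical
  obtain ⟨e, he⟩ := hD.2.1.nonempty
  have he' : e ∈ support D' := hs ▸ he
  have key : ∀ f ∈ support D, f ≠ e → ∃ a b : ℤ, (a = 1 ∨ a = -1) ∧ (b = 1 ∨ b = -1) ∧
      a * D e + b * D f = 0 ∧ a * D' e + b * D' f = 0 := by
    intro f hf hfe
    have hind : M✶.Indep (support D \ {f}) := hD.2.1.isCircuit.sdiff_singleton_indep hf
    obtain ⟨C, hC, hCe⟩ := circuit_coindep hind (e := e) ⟨he, hfe.symm⟩
    obtain ⟨g, hg, rfl⟩ := hO.ex C hC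
    have hge : e ∈ support g := by
      have : e ∈ support g ∩ (support D \ {f}) := by rw [hCe]; rfl
      exact this.1
    have hz : ∀ x, x ∉ ({e, f} : Finset α) → g x = 0 ∨ D x = 0 := by
      intro x hx
      simp at hx
      by_contra hcon
      push Not at hcon
      have : x ∈ support g ∩ (support D \ {f}) := ⟨hcon.1, hcon.2, hx.2⟩
      rw [hCe] at this
      exact hx.1 this
    have hz' : ∀ x, D x = 0 → D' x = 0 := by
      intro x hx
      by_contra h
      have : x ∈ support D := hs ▸ h
      exact this hx
    have hgf : f ∈ support g := by
      by_contra hgf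
      apply hC.inter_isCocircuit_ne_singleton hD.2.1 (e := e)
      rw [← hCe]
      ext x
      constructor
      · rintro ⟨h1, h2⟩
        refine ⟨h1, h2, ?_⟩
        rintro rfl
        exact hgf h1
      · rintro ⟨h1, h2⟩
        exact ⟨h1, h2.1⟩
    have e1 := sum_eq hD hg hC {e, f} (by
      intro x hx
      rcases hz x hx with h | h <;> simp [h])
    have e2 := sum_eq hD' hg hC {e, f} (by
      intro x hx
      rcases hz x hx with h | h
      · simp [h]
      · simp [hz' x h])
    rw [Finset.sum_insert (by simp [hfe.symm]), Finset.sum_singleton] at e1 e2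
    exact ⟨g e, g f, hO.signed g hg e hge, hO.signed g hg f hgf, e1, e2⟩
  have hz' : ∀ x, D x = 0 ↔ D' x = 0 := by
    intro x
    have : x ∈ support D ↔ x ∈ support D' := by rw [hs]
    simpa [not_iff_not] using this
  rcases hD.1 e he with h1 | h1 <;> rcases hD'.1 e he' with h2 | h2
  · left
    ext f
    by_cases hf : f ∈ support D
    · by_cases hfe : f = e
      · subst hfe; omega
      obtain ⟨a, b, ha, hb, e1, e2⟩ := key f hf hfe
      rw [h1] at e1; rw [h2] at e2
      rcases ha with rfl | rfl <;> rcases hb with rfl | rfl <;> omega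
    · have h0 : D f = 0 := by simpa using hf
      rw [h0, (hz' f).1 h0]
  · right
    ext f
    by_cases hf : f ∈ support D
    · by_cases hfe : f = e
      · subst hfe; simp; omega
      obtain ⟨a, b, ha, hb, e1, e2⟩ := key f hf hfe
      rw [h1] at e1; rw [h2] at e2
      simp only [Pi.neg_apply]
      rcases ha with rfl | rfl <;> rcases hb with rfl | rfl <;> omega
    · have h0 : D f = 0 := by simpa using hf
      simp [h0, (hz' f).1 h0]
  · right
    ext f
    by_cases hf : f ∈ support D
    · by_cases hfe : f = e
      · subst hfe; simp; omega
      obtain ⟨a, b, ha, hb, e1, e2⟩ := key f hf hfe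
      rw [h1] at e1; rw [h2] at e2
      simp only [Pi.neg_apply]
      rcases ha with rfl | rfl <;> rcases hb with rfl | rfl <;> omega
    · have h0 : D f = 0 := by simpa using hf
      simp [h0, (hz' f).1 h0]
  · left
    ext f
    by_cases hf : f ∈ support D
    · by_cases hfe : f = e
      · subst hfe; omega
      obtain ⟨a, b, ha, hb, e1, e2⟩ := key f hf hfe
      rw [h1] at e1; rw [h2] at e2
      rcases ha with rfl | rfl <;> rcases hb with rfl | rfl <;> omega
    · have h0 : D f = 0 := by simpa using hf
      rw [h0, (hz' f).1 h0]

open Classical in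
/-- restricted signed set -/
noncomputable def off (X : Set α) (D : α → ℤ) : α → ℤ := fun x => if x ∈ X then 0 else D x

lemma support_off (X : Set α) (D : α → ℤ) : support (off X D) = support D \ X := by
  ext x
  simp [off]
  tauto

lemma exists_off {M : Matroid α} {O : Set (α → ℤ)} (hO : BinO M O) (X : Set α)
    {K : Set α} (hK : (M ＼ X).IsCocircuit K) :
    ∃ D, Coc M O D ∧ support (off X D) = K ∧ Coc (M ＼ X) O (off X D) := by
  have hK' := hK
  rw [isCocircuit_def, dual_delete] at hK'
  obtain ⟨C, hC, h1, h2⟩ := hK'.exists_subset_isCircuit_of_contract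
  obtain ⟨D, hDs, rfl, hD⟩ := hO.co C hC
  have hsup : support (off X D) = K := by
    rw [support_off]
    have hKX : Disjoint K X := by
      have := hK.subset_ground
      rw [delete_ground] at this
      exact disjoint_left.2 fun x hx hxX => (this hx).2 hxX
    ext x
    constructor
    · rintro ⟨a, b⟩
      rcases h2 a with h | h
      · exact h
      · exact absurd h b
    · intro h
      exact ⟨h1 h, disjoint_left.1 hKX h⟩
  refine ⟨D, ⟨hDs, hC, hD⟩, hsup, ?_, by rwa [hsup], ?_⟩
  · intro x hx
    rw [support_off] at hx
    simp only [off, hx.2, if_false]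
    exact hDs x hx.1
  · intro g hg hc
    rw [delete_isCircuit_iff] at hc
    rw [← hD g hg hc.1]
    apply finsum_congr
    intro x
    by_cases hx : x ∈ X
    · have : g x = 0 := by
        by_contra h
        exact disjoint_left.1 hc.2 h hx
      simp [this]
    · simp [off, hx]

lemma BinO.delete {M : Matroid α} {O : Set (α → ℤ)} (hO : BinO M O) (X : Set α) :
    BinO (M ＼ X) O where
  signed := hO.signed
  neg := hO.neg
  ex := fun C hC => hO.ex C hC.of_delete
  co := fun K hK => by
    obtain ⟨D, -, h1, h2⟩ := exists_off hO X hK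
    exact ⟨_, h2.1, h1, h2.2.2⟩

lemma Coc.extend {M : Matroid α} [M.Finitary] {O : Set (α → ℤ)} (hO : BinO M O) (X : Set α)
    {D : α → ℤ} (hD : Coc (M ＼ X) O D) : ∃ D', Coc M O D' ∧ D = off X D' := by
  obtain ⟨D', h1, h2, h3⟩ := exists_off hO X hD.2.1
  rcases uniq (hO.delete X) h3 hD h2 with h | h
  · exact ⟨D', h1, h⟩
  · refine ⟨-D', coc_neg h1, ?_⟩
    rw [h]
    ext x
    simp only [off, Pi.neg_apply]
    split_ifs <;> simp

/-- a positive set meets a signed set orthogonal to it in equally many + and - -/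
lemma pos_card {g D : α → ℤ} (hg : IsPositive g) (hfin : (support g).Finite) (hD : IsSignedSet D)
    (h : ∑ᶠ e, g e * D e = 0) :
    #(↥({e | D e = 1} ∩ support g)) = #(↥({e | D e = -1} ∩ support g)) := by
  classical
  rw [finsum_eq hfin.toFinset (by simp)] at h
  set s := hfin.toFinset with hs
  have h1 : ({e | D e = 1} ∩ support g) = ↑(s.filter (fun e => D e = 1)) := by
    ext x; simp [hs, and_comm]
  have h2 : ({e | D e = -1} ∩ support g) = ↑(s.filter (fun e => D e = -1)) := by
    ext x; simp [hs, and_comm]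
  rw [h1, h2, Finset.coe_sort_coe, Finset.coe_sort_coe, mk_coe_finset, mk_coe_finset]
  have h3 : ∑ e ∈ s, g e * D e =
      ((s.filter (fun e => D e = 1)).card : ℤ) - (s.filter (fun e => D e = -1)).card := by
    rw [Finset.card_filter, Finset.card_filter]
    push_cast
    rw [← Finset.sum_sub_distrib]
    apply Finset.sum_congr rfl
    intro x hx
    rw [hg x (by simpa [hs] using hx)]
    rcases signed_cases hD x with h | h | h <;> simp [h]
  rw [h3] at h
  congr 1
  omega

lemma even_inter {g D : α → ℤ} (hg : IsSignedSet g) (hfin : (support g).Finite) (hD : IsSignedSet D)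
    (h : ∑ᶠ e, g e * D e = 0) : Even (support g ∩ support D).ncard := by
  classical
  have hf : (support g ∩ support D).Finite := hfin.subset inter_subset_left
  rw [finsum_eq hf.toFinset (by simp)] at h
  rw [ncard_eq_toFinset_card _ hf]
  have h2 := congrArg (Int.cast : ℤ → ZMod 2) h
  push_cast at h2
  rw [Finset.sum_congr rfl (g := fun _ => (1 : ZMod 2))] at h2
  · simp at h2
    exact (ZMod.natCast_eq_zero_iff_even).1 h2
  · intro x hx
    simp at hx
    rcases hg x hx.1 with h | h <;> rcases hD x hx.2 with h' | h' <;> rw [h, h'] <;> decide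

/-- Partitionable sets. -/
def Part (O : Set (α → ℤ)) (N : Set α) : Prop :=
  ∃ 𝒜 ⊆ O, (∀ C ∈ 𝒜, IsPositive C) ∧
      𝒜.Pairwise (fun C C' => Disjoint (support C) (support C')) ∧
      ⋃ C ∈ 𝒜, support C = N

lemma Part.iUnion {ι : Type*} {O : Set (α → ℤ)} {N : ι → Set α} (h : ∀ i, Part O (N i))
    (hd : Pairwise fun i j => Disjoint (N i) (N j)) : Part O (⋃ i, N i) := by
  choose 𝒜 h1 h2 h3 h4 using h
  refine ⟨⋃ i, 𝒜 i, iUnion_subset h1, ?_, ?_, ?_⟩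
  · intro C hC
    obtain ⟨i, hi⟩ := mem_iUnion.1 hC
    exact h2 i C hi
  · intro C hC C' hC' hne
    obtain ⟨i, hi⟩ := mem_iUnion.1 hC
    obtain ⟨j, hj⟩ := mem_iUnion.1 hC'
    by_cases hij : i = j
    · subst hij
      exact h3 i hi hj hne
    · refine (hd hij).mono ?_ ?_
      · rw [← h4 i]; exact subset_biUnion_of_mem (u := fun C => support C) hi
      · rw [← h4 j]; exact subset_biUnion_of_mem (u := fun C => support C) hj
  · rw [biUnion_iUnion]
    exact iUnion_congr h4

lemma Part.union {O : Set (α → ℤ)} {A B : Set α} (hA : Part O A) (hB : Part O B)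
    (hd : Disjoint A B) : Part O (A ∪ B) := by
  rw [union_eq_iUnion]
  apply Part.iUnion
  · rintro (_ | _)
    · exact hB
    · exact hA
  · rintro (_ | _) (_ | _) h
    · exact absurd rfl h
    · exact hd.symm
    · exact hd
    · exact absurd rfl h

lemma Part.empty (O : Set (α → ℤ)) : Part O ∅ := ⟨∅, by simp, by simp, by simp, by simp⟩

lemma Part.single {O : Set (α → ℤ)} {g : α → ℤ} (hg : g ∈ O) (h : IsPositive g) :
    Part O (support g) := ⟨{g}, by simpa, by simpa, by simp, by simp⟩

lemma off_eq (X : Set α) (D : α → ℤ) (c : ℤ) (hc : c ≠ 0) :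
    {e | off X D e = c} = {e | D e = c} \ X := by
  ext x
  simp only [off, mem_setOf_eq, mem_sdiff]
  split_ifs with h
  · simp [h, hc.symm]
  · simp [h]

lemma Bal.delete_circuit {M : Matroid α} [M.Finitary] {O : Set (α → ℤ)} (hO : BinO M O)
    (hB : Bal M O) {g : α → ℤ} (hg : g ∈ O) (hc : M.IsCircuit (support g)) (hp : IsPositive g) :
    Bal (M ＼ support g) O := by
  intro D hD
  obtain ⟨D', hD', rfl⟩ := hD.extend hO
  rw [off_eq _ _ _ (by simp), off_eq _ _ _ (by simp)]
  have h1 := hB D' hD'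
  have h2 := pos_card hp hc.finite hD'.1 (hD'.2.2 g hg hc)
  have e : ∀ c : ℤ, #(↥{e | D' e = c}) =
      #(↥({e | D' e = c} \ support g)) + #(↥({e | D' e = c} ∩ support g)) := by
    intro c
    rw [← mk_union_of_disjoint, sdiff_union_inter]
    exact disjoint_sdiff_inter
  rw [e, e, h2] at h1
  exact Cardinal.eq_of_add_eq_add_right h1
    (lt_aleph0_iff_set_finite.2 (hc.finite.subset inter_subset_right))

/-- deletion of a closed set preserves balance -/
lemma Bal.delete_closed {M : Matroid α} [M.Finitary] {O : Set (α → ℤ)} (hO : BinO M O)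
    (hB : Bal M O) {N : Set α} {c : Cardinal} (hc : ℵ₀ ≤ c) (hN : #N ≤ c)
    (hcl : ∀ t : Set α, t.Finite → t ⊆ N →
      (∃ F : Set (Set α), c < #F ∧ F.PairwiseDisjoint id ∧ ∀ s ∈ F, M.IsCircuit (t ∪ s)) ∨
      (∀ s : Set α, s.Nonempty → Disjoint s N → ¬ M.IsCircuit (t ∪ s))) :
    Bal (M ＼ N) O := by
  intro D₀ hD₀
  obtain ⟨D, hD, rfl⟩ := hD₀.extend hO
  rw [off_eq _ _ _ (by simp), off_eq _ _ _ (by simp)]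
  have h1 := hB D hD
  obtain ⟨e, he⟩ := hD₀.2.1.nonempty
  rw [support_off] at he
  by_cases hdis : Disjoint (support D) N
  · have : ∀ c : ℤ, c ≠ 0 → {e | D e = c} \ N = {e | D e = c} := by
      intro c hc
      apply Disjoint.sdiff_eq_left
      refine hdis.mono_left ?_
      intro x hx
      simp only [mem_setOf_eq] at hx
      simpa [hx] using hc
    rw [this _ (by simp), this _ (by simp), h1]
  have hss : support D \ N ⊂ support D := by
    refine sdiff_subset.ssubset_of_ne ?_
    intro h
    exact hdis (sdiff_eq_left.1 h)
  have hind : M✶.Indep (support D \ N) := hD.2.1.isCircuit.ssubset_indep hss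
  obtain ⟨C, hC, hCe⟩ := circuit_coindep hind he
  have heC : e ∈ C := by
    have : e ∈ C ∩ (support D \ N) := by rw [hCe]; rfl
    exact this.1
  have hevenC : ∀ C, M.IsCircuit C → Even (C ∩ support D).ncard := by
    intro C hC
    obtain ⟨g, hg, rfl⟩ := hO.ex C hC
    exact even_inter (hO.signed g hg) hC.finite hD.1 (hD.2.2 g hg hC)
  have htfin : (C ∩ N).Finite := hC.finite.subset inter_subset_left
  rcases hcl (C ∩ N) htfin inter_subset_right with ⟨F, hcF, hFd, hF⟩ | h
  swap
  · exact absurd (by rwa [inter_union_sdiff]) (h (C \ N) ⟨e, heC, he.2⟩ disjoint_sdiff_left)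
  have hodd : ¬ Even ((C ∩ N) ∩ support D).ncard := by
    have h2 := hevenC C hC
    have h3 : C ∩ support D = insert e ((C ∩ N) ∩ support D) := by
      ext x
      simp only [mem_inter_iff, mem_insert_iff]
      constructor
      · rintro ⟨a, b⟩
        by_cases hx : x ∈ N
        · tauto
        · left
          have : x ∈ C ∩ (support D \ N) := ⟨a, b, hx⟩
          rw [hCe] at this
          exact this
      · rintro (rfl | h)
        · exact ⟨heC, he.1⟩
        · tauto
    rw [h3, ncard_insert_of_notMem (by simp [he.2]) (htfin.subset inter_subset_left)] at h2
    intro h4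
    rw [Nat.even_add_one] at h2
    exact h2 h4
  have hmeet : ∀ s : F, ∃ x : support D, (x : α) ∈ (s : Set α) := by
    rintro ⟨s, hs⟩
    by_contra hno
    push Not at hno
    apply hodd
    have h2 := hevenC _ (hF s hs)
    have : ((C ∩ N) ∪ s) ∩ support D = (C ∩ N) ∩ support D := by
      ext x
      simp only [mem_inter_iff, mem_union]
      constructor
      · rintro ⟨a | a, b⟩
        · tauto
        · exact absurd a (hno ⟨x, b⟩)
      · tauto
    rwa [this] at h2
  choose f hf using hmeet
  have hinj : Injective f := by
    intro s s' hss
    by_contra hne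
    have := hFd s.2 s'.2 (fun h => hne (Subtype.ext h))
    exact disjoint_left.1 this (hf s) (by rw [hss]; exact hf s')
  have hbig : c < #(↥(support D)) := hcF.trans_le (mk_le_of_injective hinj)
  have hsplit : support D = {e | D e = 1} ∪ {e | D e = -1} := by
    ext x
    simp only [mem_support, mem_union, mem_setOf_eq]
    rcases signed_cases hD.1 x with h | h | h <;> simp [h]
  have hle : #(↥(support D)) ≤ #(↥{e | D e = 1}) + #(↥{e | D e = -1}) := by
    rw [hsplit]; exact mk_union_le _ _
  have hbig1 : c < #(↥{e | D e = 1}) := by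
    by_contra hcon
    push Not at hcon
    rw [← h1] at hle
    exact absurd (hbig.trans_le (hle.trans (add_le_of_le hc hcon hcon))) (lt_irrefl _)
  have hrem : ∀ S : Set α, c < #S → #(↥(S \ N)) = #S := by
    intro S hS
    apply le_antisymm (mk_le_mk_of_subset sdiff_subset)
    by_contra hcon
    push Not at hcon
    have h2 : #S ≤ #(↥(S \ N)) + #N := by
      calc #S ≤ #(↥((S \ N) ∪ N)) := mk_le_mk_of_subset (by intro x; simp; tauto)
        _ ≤ _ := mk_union_le _ _
    exact absurd (h2.trans_lt (add_lt_of_lt (hc.trans hS.le) hcon (hN.trans_lt hS))) (lt_irrefl _)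
  rw [hrem _ hbig1, hrem _ (h1 ▸ hbig1), h1]

end DirCirc

namespace DirCirc

open Matroid Cardinal

universe u

lemma finite_case {α : Type u} {M : Matroid α} [M.Finitary] {O : Set (α → ℤ)} (hO : BinO M O)
    (hB : Bal M O) {A : Set α} (hA : A.Finite) (hAE : A ⊆ M.E) :
    ∃ N : Set α, N.Finite ∧ A ⊆ N ∧ N ⊆ M.E ∧ Part O N ∧ Bal (M ＼ N) O := by
  induction A, hA using Set.Finite.induction_on with
  | empty =>
    exact ⟨∅, finite_empty, Subset.rfl, empty_subset _, Part.empty O, by rwa [delete_empty]⟩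
  | @insert a S ha hS ih =>
    obtain ⟨N, hN, hSN, hNE, hP, hBN⟩ := ih ((subset_insert _ _).trans hAE)
    by_cases haN : a ∈ N
    · exact ⟨N, hN, insert_subset haN hSN, hNE, hP, hBN⟩
    have hO' := hO.delete N
    obtain ⟨g, hg, hc, hga, hp⟩ := exists_pos_circuit hO' hBN (e := a)
      ⟨hAE (mem_insert _ _), haN⟩
    have hgE : support g ⊆ M.E \ N := hc.subset_ground
    have hdis : Disjoint N (support g) := disjoint_left.2 fun x hx hx' => (hgE hx').2 hx
    have hB2 := Bal.delete_circuit hO' hBN hg hc hp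
    rw [delete_delete] at hB2
    refine ⟨N ∪ support g, hN.union hc.finite, insert_subset (Or.inr ?_)
      (hSN.trans subset_union_left), union_subset hNE (hgE.trans sdiff_subset),
      hP.union (Part.single hg hp) hdis, hB2⟩
    simp [hga]

lemma enumerate {β : Type u} (S : Set β) (d : β) :
    ∃ f : Ordinal.{u} → β, (∀ s ∈ S, ∃ k < (#S).ord, f k = s) ∧ ∀ k, f k ∈ S ∨ f k = d := by
  classical
  have h : Nonempty (S ≃ Iio (#S).ord) := by
    rw [← Cardinal.lift_mk_eq', Cardinal.mk_Iio_ordinal]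
    simp
  obtain ⟨e⟩ := h
  refine ⟨fun k => if hk : k < (#S).ord then (e.symm ⟨k, hk⟩ : β) else d, ?_, ?_⟩
  · intro s hs
    refine ⟨(e ⟨s, hs⟩).1, (e ⟨s, hs⟩).2, ?_⟩
    have := (e ⟨s, hs⟩).2
    rw [mem_Iio] at this
    refine (dif_pos this).trans ?_
    exact congrArg Subtype.val (e.symm_apply_apply ⟨s, hs⟩)
  · intro k
    by_cases hk : k < (#S).ord
    · left; simp [hk]
    · right; simp [hk]

lemma exists_cover {α : Type u} (M : Matroid α) [M.Finitary] (t : Finset α) :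
    ∃ f : Ordinal.{u} → Set α, (∀ k, (f k).Finite) ∧ ∀ i : Ordinal.{u},
      (∃ F : Set (Set α), i.card < #F ∧ F.PairwiseDisjoint id ∧ ∀ s ∈ F, M.IsCircuit (t ∪ s)) ∨
      (∀ s : Set α, s.Nonempty → M.IsCircuit (t ∪ s) → ∃ k < i, (s ∩ f k).Nonempty) := by
  obtain ⟨F, hF⟩ := zorn_subset
    {F : Set (Set α) | F.PairwiseDisjoint id ∧ ∀ s ∈ F, M.IsCircuit (t ∪ s)} (by
      intro c hc hch
      refine ⟨⋃₀ c, ⟨?_, ?_⟩, fun s hs => subset_sUnion_of_mem hs⟩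
      · exact (pairwiseDisjoint_sUnion hch.directedOn).2 fun s hs => (hc hs).1
      · rintro s ⟨a, ha, hs⟩
        exact (hc ha).2 s hs)
  obtain ⟨f, hf, hf'⟩ := enumerate F ∅
  refine ⟨f, ?_, ?_⟩
  · intro k
    rcases hf' k with h | h
    · exact (hF.prop.2 _ h).finite.subset subset_union_right
    · rw [h]; exact finite_empty
  · intro i
    rcases lt_or_ge i.card #F with h | h
    · exact Or.inl ⟨F, h, hF.prop⟩
    right
    intro s hs hc
    have hm : ∃ s' ∈ F, (s ∩ s').Nonempty := by
      by_cases hsF : s ∈ F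
      · exact ⟨s, hsF, by simpa using hs⟩
      by_contra hcon
      push Not at hcon
      apply hsF
      refine hF.le_of_ge (y := insert s F) ⟨?_, ?_⟩ (subset_insert _ _) (mem_insert _ _)
      · apply hF.prop.1.insert
        intro s' hs' _
        exact disjoint_iff_inter_eq_empty.2 (by simpa using hcon s' hs')
      · rintro s' (rfl | hs')
        · exact hc
        · exact hF.prop.2 _ hs'
    obtain ⟨s', hs', hne⟩ := hm
    obtain ⟨k, hk, rfl⟩ := hf s' hs'
    exact ⟨k, hk.trans_le (Cardinal.ord_le.2 h), hne⟩

/-- size condition -/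
def Sm {α : Type u} (j : Ordinal.{u}) (X : Set α) : Prop :=
  (j.card < ℵ₀ → X.Finite) ∧ #X ≤ max ℵ₀ j.card

/-- the set to be added at stage `j`. -/
def stage {α : Type u} (a : Ordinal.{u} → Set α) (v : Finset α → Ordinal.{u} → Set α)
    (j : Ordinal.{u}) (X : Set α) : Set α :=
  a j ∪ ⋃ k < j, ⋃ t ∈ {t : Finset α | (t : Set α) ⊆ X}, v t k

lemma finsets_eq {α : Type u} (X : Set α) :
    {t : Finset α | (t : Set α) ⊆ X} = range (fun t : Finset X => t.map (Embedding.subtype _)) := by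
  ext t
  constructor
  · intro h
    classical
    refine ⟨t.subtype (· ∈ X), ?_⟩
    simpa using Finset.subtype_map_of_mem (p := (· ∈ X)) (fun x hx => h hx)
  · rintro ⟨t, rfl⟩
    intro x hx
    simp at hx
    exact hx.1

lemma stage_sm {α : Type u} {a : Ordinal.{u} → Set α} {v : Finset α → Ordinal.{u} → Set α}
    (ha : ∀ j, (a j).Finite) (hv : ∀ t k, (v t k).Finite) {j : Ordinal.{u}} {X : Set α}
    (hX : Sm j X) : Sm j (stage a v j X) := by
  constructor
  · intro hj
    have hXf := hX.1 hj
    have : Finite X := hXf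
    refine (ha j).union ?_
    have h1 : (Iio j).Finite := by
      rw [← Set.finite_coe_iff, ← Cardinal.lt_aleph0_iff_finite, Cardinal.mk_Iio_ordinal]
      exact Cardinal.lift_lt_aleph0.2 hj
    have h2 : {t : Finset α | (t : Set α) ⊆ X}.Finite := by
      rw [finsets_eq]; exact finite_range _
    exact h1.biUnion fun k _ => h2.biUnion fun t _ => hv t k
  · set c := max ℵ₀ j.card with hc
    have hcc : ℵ₀ ≤ c := le_max_left _ _
    have h2 : #{t : Finset α | (t : Set α) ⊆ X} ≤ c := by
      rw [finsets_eq]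
      refine Cardinal.mk_range_le.trans ?_
      rcases finite_or_infinite X with h | h
      · exact (Cardinal.mk_le_aleph0).trans hcc
      · rw [Cardinal.mk_finset_of_infinite]; exact hX.2
    refine (Cardinal.mk_union_le _ _).trans (Cardinal.add_le_of_le hcc
      ((ha j).lt_aleph0.le.trans hcc) ?_)
    refine Cardinal.mk_biUnion_le_of_le (le_max_right _ _) hcc _ fun k _ => ?_
    rw [biUnion_eq_iUnion]
    refine (Cardinal.mk_iUnion_le _).trans ?_
    refine (mul_le_mul' h2 (ciSup_le' fun t : {t : Finset α | (t : Set α) ⊆ X} => ((hv t.1 k).lt_aleph0.le.trans hcc))).trans ?_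
    exact (Cardinal.mul_eq_self hcc).le

lemma Sm.mono {α : Type u} {i j : Ordinal.{u}} {X : Set α} (h : Sm i X) (hij : i ≤ j) : Sm j X :=
  ⟨fun hj => h.1 ((Ordinal.card_le_card hij).trans_lt hj),
    h.2.trans (max_le_max le_rfl (Ordinal.card_le_card hij))⟩

lemma main {α : Type u} {O : Set (α → ℤ)} (c : Cardinal.{u}) :
    ∀ (M : Matroid α) [M.Finitary], BinO M O → Bal M O → ∀ A ⊆ M.E, #A = c →
      ∃ N : Set α, A ⊆ N ∧ N ⊆ M.E ∧ Part O N ∧ Bal (M ＼ N) O ∧ (A.Finite → N.Finite) ∧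
        #N ≤ max ℵ₀ #A := by
  induction c using WellFoundedLT.induction with
  | ind c IH =>
  intro M _ hO hB A hAE hAc
  by_cases hAfin : A.Finite
  · obtain ⟨N, hN, h1, h2, h3, h4⟩ := finite_case hO hB hAfin hAE
    exact ⟨N, h1, h2, h3, h4, fun _ => hN, hN.lt_aleph0.le.trans (le_max_left _ _)⟩
  have hinf : ℵ₀ ≤ c := by
    rw [← hAc, Cardinal.aleph0_le_mk_iff]
    exact Set.infinite_coe_iff.2 hAfin
  choose v hvfin hv using exists_cover M
  obtain ⟨a, ha, ha'⟩ := enumerate ((fun x => ({x} : Set α)) '' A) ∅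
  have hcard : #((fun x => ({x} : Set α)) '' A) = c := by
    rw [Cardinal.mk_image_eq singleton_injective, hAc]
  rw [hcard] at ha
  have hafin : ∀ j, (a j).Finite := by
    intro j
    rcases ha' j with ⟨x, -, h⟩ | h
    · rw [← h]; exact finite_singleton x
    · rw [h]; exact finite_empty
  have step : ∀ (j : Ordinal.{u}) (X : Set α), ∃ Y, X ⊆ Y ∧
      (X ⊆ M.E → Bal (M ＼ X) O → j < c.ord → Sm j X →
        stage a v j X ∩ M.E ⊆ Y ∧ Y ⊆ M.E ∧ Part O (Y \ X) ∧ Bal (M ＼ Y) O ∧ Sm j Y) := by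
    intro j X
    by_cases h : X ⊆ M.E ∧ Bal (M ＼ X) O ∧ j < c.ord ∧ Sm j X
    swap
    · exact ⟨X, Subset.rfl, fun h1 h2 h3 h4 => (h ⟨h1, h2, h3, h4⟩).elim⟩
    obtain ⟨hXE, hXB, hj, hX⟩ := h
    have hs := stage_sm hafin hvfin hX
    have hsub : (stage a v j X ∩ M.E) \ X ⊆ stage a v j X :=
      sdiff_subset.trans inter_subset_left
    have hle : #(((stage a v j X ∩ M.E) \ X : Set α)) ≤ max ℵ₀ j.card :=
      (Cardinal.mk_le_mk_of_subset hsub).trans hs.2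
    have hjc : j.card < c := Cardinal.lt_ord.1 hj
    have hlt : #(((stage a v j X ∩ M.E) \ X : Set α)) < c := by
      rcases lt_or_ge j.card ℵ₀ with h | h
      · exact ((hs.1 h).subset hsub).lt_aleph0.trans_le hinf
      · exact hle.trans_lt (max_lt (h.trans_lt hjc) hjc)
    obtain ⟨N, h1, h2, h3, h4, h5, h6⟩ := IH _ hlt (M ＼ X) (hO.delete X) hXB
      ((stage a v j X ∩ M.E) \ X) (fun x hx => ⟨hx.1.2, hx.2⟩) rfl
    have h2' : N ⊆ M.E \ X := h2
    rw [delete_delete] at h4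
    refine ⟨X ∪ N, subset_union_left, fun _ _ _ _ => ⟨?_, ?_, ?_, h4, ?_, ?_⟩⟩
    · intro x hx
      by_cases hxX : x ∈ X
      · exact Or.inl hxX
      · exact Or.inr (h1 ⟨hx, hxX⟩)
    · exact union_subset hXE (h2'.trans sdiff_subset)
    · have : (X ∪ N) \ X = N := by
        ext x
        constructor
        · rintro ⟨h | h, h'⟩
          · exact (h' h).elim
          · exact h
        · intro h
          exact ⟨Or.inr h, (h2' h).2⟩
      rw [this]; exact h3
    · intro h
      exact (hX.1 h).union (h5 ((hs.1 h).subset hsub))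
    · refine (Cardinal.mk_union_le _ _).trans (Cardinal.add_le_of_le (le_max_left _ _) hX.2 ?_)
      exact h6.trans (max_le (le_max_left _ _) hle)
  choose F hXF hF using step
  obtain ⟨N, hN⟩ : ∃ N : Ordinal.{u} → Set α, ∀ i, N i = ⋃ j < i, F j (N j) := by
    refine ⟨Ordinal.lt_wf.fix fun i r => ⋃ j, ⋃ (h : j < i), F j (r j h), fun i => ?_⟩
    rw [WellFounded.fix_eq]
  have hsub : ∀ {i j}, j < i → F j (N j) ⊆ N i := by
    intro i j h
    rw [hN i]
    exact subset_biUnion_of_mem (u := fun j => F j (N j)) (show j ∈ {j | j < i} from h)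
  have hmono : ∀ {i j}, j ≤ i → N j ⊆ N i := by
    intro i j h
    rcases h.eq_or_lt with rfl | h
    · rfl
    · exact (hXF j (N j)).trans (hsub h)
  have hsucc : ∀ j, N (Order.succ j) = F j (N j) := by
    intro j
    apply Subset.antisymm
    · rw [hN]
      refine iUnion₂_subset fun k hk => ?_
      rcases (Order.lt_succ_iff.1 hk).eq_or_lt with rfl | h
      · rfl
      · exact (hsub h).trans (hXF _ _)
    · exact hsub (Order.lt_succ j)
  have hmem : ∀ {i x}, x ∈ N i → ∃ j < i, x ∈ F j (N j) := by
    intro i x hx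
    rw [hN] at hx
    simpa using hx
  have key : ∀ i ≤ c.ord, N i ⊆ M.E ∧ Bal (M ＼ N i) O ∧ Sm i (N i) := by
    intro i
    induction i using WellFoundedLT.induction with
    | ind i ih =>
    intro hi
    have hstep : ∀ j < i, _ := fun j hj => hF j (N j) (ih j hj (hj.le.trans hi)).1
      (ih j hj (hj.le.trans hi)).2.1 (hj.trans_le hi) (ih j hj (hj.le.trans hi)).2.2
    have hE : N i ⊆ M.E := by
      rw [hN]
      exact iUnion₂_subset fun j hj => (hstep j hj).2.1
    have hsize : #(N i) ≤ max ℵ₀ i.card := by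
      rw [hN]
      exact Cardinal.mk_biUnion_le_of_le (le_max_right _ _) (le_max_left _ _) _
        fun j hj => (((hstep j hj).2.2.2.2).mono hj.le).2
    rcases Ordinal.zero_or_succ_or_isSuccLimit i with rfl | ⟨j, rfl⟩ | hlim
    · have h0 : N 0 = ∅ := by
        rw [hN]; simp
      rw [h0]
      refine ⟨empty_subset _, by rwa [delete_empty], fun _ => finite_empty, by simp⟩
    · have h := hstep j (Order.lt_succ j)
      rw [hsucc]
      exact ⟨h.2.1, h.2.2.2.1, h.2.2.2.2.mono (Order.le_succ j)⟩
    · have hom : ℵ₀ ≤ i.card := Ordinal.aleph0_le_card.2 (Ordinal.omega0_le_of_isSuccLimit hlim)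
      refine ⟨hE, ?_, fun h => absurd h (not_lt.2 hom), hsize⟩
      refine Bal.delete_closed hO hB hom (hsize.trans (max_le hom le_rfl)) ?_
      intro t htf ht
      have hfinsub : ∃ j < i, t ⊆ N j := by
        clear hv
        induction t, htf using Set.Finite.induction_on with
        | empty => exact ⟨0, hlim.bot_lt, empty_subset _⟩
        | @insert x S _ _ ihS =>
          obtain ⟨j, hj, hS⟩ := ihS ((subset_insert _ _).trans ht)
          obtain ⟨k, hk, hx⟩ := hmem (ht (mem_insert _ _))
          refine ⟨max j (Order.succ k), max_lt hj (hlim.succ_lt hk), insert_subset ?_ ?_⟩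
          · apply hmono (le_max_right _ _)
            rw [hsucc]; exact hx
          · exact hS.trans (hmono (le_max_left _ _))
      obtain ⟨j, hj, htj⟩ := hfinsub
      lift t to Finset α using htf
      rcases hv t i with h | h
      · exact Or.inl h
      right
      intro s hs hdis hc
      obtain ⟨k, hk, x, hxs, hxv⟩ := h s hs hc
      have hm : Order.succ (max j k) < i := hlim.succ_lt (max_lt hj hk)
      refine disjoint_left.1 hdis hxs (hsub hm ((hstep _ hm).1 ⟨Or.inr ?_, ?_⟩))
      · refine mem_iUnion₂.2 ⟨k, Order.lt_succ_iff.2 (le_max_right _ _), ?_⟩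
        refine mem_iUnion₂.2 ⟨t, ?_, hxv⟩
        exact htj.trans (hmono ((le_max_left _ _).trans (Order.le_succ _)))
      · exact hc.subset_ground (Or.inr hxs)
  obtain ⟨hE, hBal, hsm⟩ := key c.ord le_rfl
  have hstep : ∀ j < c.ord, _ := fun j hj => hF j (N j) (key j hj.le).1
      (key j hj.le).2.1 hj (key j hj.le).2.2
  refine ⟨N c.ord, ?_, hE, ?_, hBal, fun h => (hAfin h).elim, ?_⟩
  · intro x hx
    obtain ⟨k, hk, hak⟩ := ha {x} ⟨x, hx, rfl⟩
    refine hsub hk ((hstep k hk).1 ⟨Or.inl ?_, hAE hx⟩)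
    rw [hak]; rfl
  · have heq : N c.ord = ⋃ j : Iio c.ord, (F j.1 (N j.1) \ N j.1) := by
      apply Subset.antisymm
      · intro x hx
        obtain ⟨i, hi, hmin⟩ := WellFounded.has_min Ordinal.lt_wf {i | x ∈ F i (N i)}
          (by obtain ⟨j, -, hj⟩ := hmem hx; exact ⟨j, hj⟩)
        have hic : i < c.ord := by
          obtain ⟨j, hj, hxj⟩ := hmem hx
          exact (not_lt.1 (hmin j hxj)).trans_lt hj
        refine mem_iUnion.2 ⟨⟨i, hic⟩, hi, fun hx' => ?_⟩
        obtain ⟨j, hj, hxj⟩ := hmem hx'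
        exact hmin j hxj hj
      · exact iUnion_subset fun j => sdiff_subset.trans (hsub j.2)
    rw [heq]
    refine Part.iUnion (fun j => (hstep j.1 j.2).2.2.1) ?_
    intro i j hij
    have hij' : i.1 ≠ j.1 := fun h => hij (Subtype.ext h)
    rw [disjoint_left]
    rintro x ⟨hx1, hx2⟩ ⟨hx3, hx4⟩
    rcases lt_or_gt_of_ne hij' with h | h
    · exact hx4 (hsub h hx1)
    · exact hx2 (hsub h hx3)
  · refine hsm.2.trans ?_
    rw [Cardinal.card_ord, hAc]

end DirCirc
/-- A finitary binary oriented matroid can be partitioned into directed circuits if and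
only if it is balanced: there is a set of positive signed circuits whose domains are
pairwise disjoint with union the ground set iff every signed cocircuit has equally many
positive and negative elements. -/
theorem partition_into_directed_circuits_iff_balanced (M : Matroid α) [M.Finitary]
    (O Ostar : Set (α → ℤ))
    (hor : IsOrientation M O Ostar) (hbin : IsBinaryOrientation O Ostar) :
    (∃ 𝒜 ⊆ O, (∀ C ∈ 𝒜, IsPositive C) ∧
      𝒜.Pairwise (fun C C' => Disjoint (Function.support C) (Function.support C')) ∧
      ⋃ C ∈ 𝒜, Function.support C = M.E) ↔ IsBalanced Ostar := by
  constructor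
  · rintro ⟨𝒜, hAO, hpos, hdis, hun⟩ D hD
    have hsub : support D ⊆ M.E := by
      have h := (hor.cocircuit_signature.dom_mem D hD)
      exact h.prop.subset_ground
    have hun' : ∀ e, D e ≠ 0 → ∃ C ∈ 𝒜, e ∈ support C := by
      intro e he
      have : e ∈ ⋃ C ∈ 𝒜, Function.support C := by rw [hun]; exact hsub he
      simpa using this
    have hcard : ∀ z : ℤ, z ≠ 0 → Cardinal.mk {e : α | D e = z} =
        Cardinal.sum fun C : 𝒜 => Cardinal.mk ↥({e : α | D e = z} ∩ support C.1) := by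
      intro z hz
      have h1 : {e : α | D e = z} = ⋃ C : 𝒜, ({e : α | D e = z} ∩ support C.1) := by
        ext e
        constructor
        · intro he
          have he' : D e = z := he
          obtain ⟨C, hC, heC⟩ := hun' e (by rw [he']; exact hz)
          exact mem_iUnion.2 ⟨⟨C, hC⟩, he, heC⟩
        · intro he
          obtain ⟨C, h, -⟩ := mem_iUnion.1 he
          exact h
      conv_lhs => rw [h1]
      have hd : Pairwise (Disjoint on fun C : 𝒜 => ({e : α | D e = z} ∩ support C.1)) := by
        intro C C' hne
        exact (hdis C.2 C'.2 (fun h => hne (Subtype.ext h))).mono inter_subset_right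
          inter_subset_right
      rw [← Cardinal.lift_inj, Cardinal.mk_iUnion_eq_sum_mk_lift hd]
      simp
    rw [hcard 1 (by norm_num), hcard (-1) (by norm_num)]
    congr 1
    ext C
    refine DirCirc.pos_card (hpos _ C.2) ?_ (hor.cocircuit_signature.signed D hD)
      (hbin _ (hAO C.2) D hD)
    have h : M.IsCircuit (support C.1) := hor.circuit_signature.dom_mem _ (hAO C.2)
    exact h.finite
  · intro hbal
    have hO : DirCirc.BinO M O :=
      { signed := hor.circuit_signature.signed
        neg := hor.circuit_signature.neg_mem
        ex := fun C hC => hor.circuit_signature.exists_signing C hC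
        co := by
          intro K hK
          obtain ⟨D, hD, hs⟩ := hor.cocircuit_signature.exists_signing K hK
          exact ⟨D, hor.cocircuit_signature.signed D hD, hs, fun g hg _ => hbin g hg D hD⟩ }
    have hB : DirCirc.Bal M O := by
      intro D hD
      obtain ⟨D', hD', hs⟩ := hor.cocircuit_signature.exists_signing (support D) hD.2.1
      have hc' : DirCirc.Coc M O D' := ⟨hor.cocircuit_signature.signed D' hD',
        hs ▸ hD.2.1, fun g hg _ => hbin g hg D' hD'⟩
      rcases DirCirc.uniq hO hc' hD hs with rfl | rfl
      · exact hbal _ hD'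
      · exact hbal _ (hor.cocircuit_signature.neg_mem _ hD')
    obtain ⟨N, h1, h2, h3, -⟩ := DirCirc.main (O := O) _ M hO hB M.E Subset.rfl rfl
    obtain rfl : N = M.E := h2.antisymm h1
    exact h3
end
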